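/- Let Ω₁, Ω₂ be open subsets of ℝⁿ and let f ∈ BV_loc(Ω₁, Ω₂) have no jump part. If for every set E ⊆ Ω₂ of finite perimeter in Ω₂ the set f⁻¹(E) has finite perimeter in Ω₁ and P(f⁻¹(E), Ω₁) ≤ K·P(E, Ω₂) for a fixed constant K, then |Df|(f̃⁻¹(A)) ≤ 16nK·Lⁿ(A) for all Borel sets A ⊆ Ω₂. -/

import Mathlib

open MeasureTheory Metric Set Filter
open scoped ENNReal Topology NNReal

noncomputable section

/-- `ℝⁿ` as a Euclidean space. -/
abbrev En (n : ℕ) : Type := EuclideanSpace ℝ (Fin n)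

/-- A smooth test function compactly supported inside the set `Ω`. -/
def SmoothTest {n : ℕ} (Ω : Set (En n)) (φ : En n → ℝ) : Prop :=
  ContDiff ℝ (⊤ : ℕ∞) φ ∧ HasCompactSupport φ ∧ tsupport φ ⊆ Ω

/-- Frobenius norm of an `m × n` array of reals. -/
def frobNorm {m n : ℕ} (M : Fin m → Fin n → ℝ) : ℝ :=
  Real.sqrt (∑ j, ∑ i, M j i ^ 2)

/-- `Df = σ ⬝ ν` is the polar decomposition of the distributional derivative of the
mapping `f : Ω → ℝᵐ`: `σ` is a matrix field of unit Frobenius norm `ν`-a.e., `ν` is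
carried by `Ω`, and the integration-by-parts formula holds against all smooth test
functions compactly supported in `Ω`.  In particular `ν = |Df|` is the total variation
measure of `Df` on `Ω`. -/
def IsVariationMeasure {n m : ℕ} (Ω : Set (En n)) (f : En n → En m)
    (σ : En n → Fin m → Fin n → ℝ) (ν : Measure (En n)) : Prop :=
  Measurable σ ∧ (∀ᵐ x ∂ν, frobNorm (σ x) = 1) ∧ ν Ωᶜ = 0 ∧
    ∀ φ : En n → ℝ, SmoothTest Ω φ → ∀ (j : Fin m) (i : Fin n),
      ∫ x in Ω, f x j * fderiv ℝ φ x (EuclideanSpace.single i 1) ∂volume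
        = - ∫ x, φ x * σ x j i ∂ν

/-- `f ∈ BV(Ω, ℝᵐ)` with total variation measure `ν`. -/
def MemBV {n m : ℕ} (Ω : Set (En n)) (f : En n → En m) (ν : Measure (En n)) : Prop :=
  IntegrableOn f Ω volume ∧ ν Ω < ⊤ ∧ ∃ σ, IsVariationMeasure Ω f σ ν

/-- `f ∈ BV_loc(Ω, ℝᵐ)` with total variation measure `ν`, finite on compact subsets of `Ω`. -/
def MemBVloc {n m : ℕ} (Ω : Set (En n)) (f : En n → En m) (ν : Measure (En n)) : Prop :=
  LocallyIntegrableOn f Ω volume ∧ (∀ C : Set (En n), IsCompact C → C ⊆ Ω → ν C < ⊤) ∧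
    ∃ σ, IsVariationMeasure Ω f σ ν

/-- Scalar version of `IsVariationMeasure`: `Du = σ ⬝ ν` with `|σ| = 1` `ν`-a.e. -/
def IsVariationMeasureS {n : ℕ} (Ω : Set (En n)) (u : En n → ℝ)
    (σ : En n → Fin n → ℝ) (ν : Measure (En n)) : Prop :=
  Measurable σ ∧ (∀ᵐ x ∂ν, Real.sqrt (∑ i, σ x i ^ 2) = 1) ∧ ν Ωᶜ = 0 ∧
    ∀ φ : En n → ℝ, SmoothTest Ω φ → ∀ i : Fin n,
      ∫ x in Ω, u x * fderiv ℝ φ x (EuclideanSpace.single i 1) ∂volume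
        = - ∫ x, φ x * σ x i ∂ν

/-- `u ∈ BV(Ω)` with total variation measure `ν`. -/
def MemBVs {n : ℕ} (Ω : Set (En n)) (u : En n → ℝ) (ν : Measure (En n)) : Prop :=
  IntegrableOn u Ω volume ∧ ν Ω < ⊤ ∧ ∃ σ, IsVariationMeasureS Ω u σ ν

/-- `u ∈ BV_loc(Ω)` with total variation measure `ν`. -/
def MemBVlocs {n : ℕ} (Ω : Set (En n)) (u : En n → ℝ) (ν : Measure (En n)) : Prop :=
  LocallyIntegrableOn u Ω volume ∧ (∀ C : Set (En n), IsCompact C → C ⊆ Ω → ν C < ⊤) ∧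
    ∃ σ, IsVariationMeasureS Ω u σ ν

/-- `z` is the approximate limit of `f` at `x`. -/
def ApproxLimAt {n m : ℕ} (f : En n → En m) (x : En n) (z : En m) : Prop :=
  Tendsto (fun r : ℝ =>
      (∫ y in Metric.ball x r, ‖f y - z‖ ∂volume) / (volume (Metric.ball x r)).toReal)
    (nhdsWithin 0 (Set.Ioi 0)) (nhds 0)

/-- `f̃⁻¹(A)`: the preimage of `A` under the precise representative (approximate limit)
of `f`; a point belongs to it iff the approximate limit of `f` exists there and lies in `A`. -/
def tildePreimage {n m : ℕ} (f : En n → En m) (A : Set (En m)) : Set (En n) :=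
  {x | ∃ z ∈ A, ApproxLimAt f x z}

/-- `f` has no jump part: its variation measure does not charge the approximate
discontinuity set of `f`. -/
def NoJumpPart {n m : ℕ} (f : En n → En m) (ν : Measure (En n)) : Prop :=
  ν {x | ¬ ∃ z, ApproxLimAt f x z} = 0

/-- `f` is a homeomorphism of `Ω₁` onto `Ω₂`, with inverse `g`. -/
def IsHomeoOn {n : ℕ} (f g : En n → En n) (Ω₁ Ω₂ : Set (En n)) : Prop :=
  ContinuousOn f Ω₁ ∧ ContinuousOn g Ω₂ ∧ MapsTo f Ω₁ Ω₂ ∧ MapsTo g Ω₂ Ω₁ ∧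
    (∀ x ∈ Ω₁, g (f x) = x) ∧ (∀ y ∈ Ω₂, f (g y) = y)

/-! Fix an image coordinate `j`. Averaging the indicators of the translates of a box, with side `ℓ`
in direction `j` and `mℓ` in the other directions, against the density
`z ↦ cos (π z_j / ℓ + θ) v z` produces a smooth function `G`. By Fubini the perimeter hypothesis
on single boxes bounds `∫ G(f) div Φ` for every test field `Φ` with `|Φ| ≤ 1`. Since `f` has no
jump part, the chain rule reads `D(G ∘ f) = ∑ₖ ∂ₖG(f̃) Df_k`, so duality bounds the total variation
`∫ |∑ₖ ∂ₖG(f̃) σ_k| d|Df|`, where `Df = σ |Df|`.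

The two faces orthogonal to `e_j` lie half a period apart, so their contributions to `∂_j G` add up
to `2 cos (⋯) v` times the face area, while the faces orthogonal to the other `e_k` contribute only
`O(ℓ)` relative to that area; yet the whole surface of the box has at most four times the area of
one of the two main faces. Using the phases `θ = 0` and `θ = π/2` with `|cos| + |sin| ≥ 1` and
letting `ℓ → 0` gives `∫ v(f̃) |σ_j| d|Df| ≤ 4K ∫ v`, and summing over `j` gives the bound. -/

section OpenSets

variable {X : Type*} [MetricSpace X] [SigmaCompactSpace X] [MeasurableSpace X]

theorem measure_le_of_forall_isCompact {μ : Measure X} {U : Set X} (hU : IsOpen U) {M : ℝ≥0∞}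
    (h : ∀ C, IsCompact C → C ⊆ U → μ C ≤ M) : μ U ≤ M := by
  have hreg : Measure.InnerRegularWRT μ IsCompact IsOpen :=
    (Measure.InnerRegularWRT.isCompact_isClosed μ).trans
      (Measure.InnerRegularWRT.of_pseudoMetrizableSpace μ)
  refine le_of_forall_lt fun r hr => ?_
  obtain ⟨C, hCU, hC, hrC⟩ := hreg hU r hr
  exact hrC.trans_le (h C hC hCU)

theorem lintegral_le_of_forall_isCompact [BorelSpace X] {μ : Measure X} {U : Set X}
    (hU : IsOpen U) (hμ : μ Uᶜ = 0) {g : X → ℝ≥0∞} {M : ℝ≥0∞}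
    (h : ∀ C, IsCompact C → C ⊆ U → ∫⁻ x in C, g x ∂μ ≤ M) : ∫⁻ x, g x ∂μ ≤ M := by
  rw [← setLIntegral_univ, ← union_compl_self U,
    setLIntegral_congr (union_ae_eq_left_of_ae_eq_empty (ae_eq_empty.2 hμ)),
    ← withDensity_apply g hU.measurableSet]
  refine measure_le_of_forall_isCompact hU fun C hC hCU => ?_
  rw [withDensity_apply g hC.measurableSet]
  exact h C hC hCU

end OpenSets

section TestFunctions

variable {n : ℕ} {Ω : Set (En n)}

theorem exists_smoothTest_eqOn_one {C U : Set (En n)} (hC : IsCompact C) (hU : IsOpen U)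
    (hCU : C ⊆ U) : ∃ χ : En n → ℝ, SmoothTest U χ ∧ (∀ x, χ x ∈ Icc 0 1) ∧ ∀ x ∈ C, χ x = 1 := by
  obtain ⟨L, hL, hCL, hLU⟩ := exists_compact_between hC hU hCU
  obtain ⟨χ, hχ, hrange, hsupp, hone⟩ :=
    exists_contMDiff_support_eq_eq_one_iff (n := (⊤ : ℕ∞)) (modelWithCornersSelf ℝ (En n))
      isOpen_interior hC.isClosed hCL
  have htsupp : tsupport χ ⊆ L :=
    closure_minimal (hsupp.trans_subset interior_subset) hL.isClosed
  exact ⟨χ, ⟨hχ.contDiff, hL.of_isClosed_subset (isClosed_tsupport χ) htsupp,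
    htsupp.trans hLU⟩, fun x => hrange ⟨x, rfl⟩, fun x hx => (hone x).1 hx⟩

theorem measure_le_of_forall_smoothTest {μ lam : Measure (En n)} [lam.OuterRegular]
    (hΩ : IsOpen Ω)
    (h : ∀ v, SmoothTest Ω v → (∀ x, v x ∈ Icc 0 1) →
      ∫⁻ x, ENNReal.ofReal (v x) ∂μ ≤ ∫⁻ x, ENNReal.ofReal (v x) ∂lam)
    {A : Set (En n)} (hA : A ⊆ Ω) : μ A ≤ lam A := by
  have hopen : ∀ U, IsOpen U → U ⊆ Ω → μ U ≤ lam U := by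
    refine fun U hU hUΩ => measure_le_of_forall_isCompact hU fun C hC hCU => ?_
    obtain ⟨χ, hχ, h01, hone⟩ := exists_smoothTest_eqOn_one hC hU hCU
    have hlower : C.indicator 1 ≤ fun x => ENNReal.ofReal (χ x) :=
      indicator_le fun x hx => by simp [hone x hx]
    have hupper : (fun x => ENNReal.ofReal (χ x)) ≤ U.indicator 1 := fun x => by
      by_cases hx : x ∈ U
      · simpa [hx] using (h01 x).2
      · simp [hx, image_eq_zero_of_notMem_tsupport fun hx' => hx (hχ.2.2 hx')]
    calc μ C = ∫⁻ x, C.indicator 1 x ∂μ := (lintegral_indicator_one hC.measurableSet).symm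
      _ ≤ ∫⁻ x, ENNReal.ofReal (χ x) ∂μ := lintegral_mono hlower
      _ ≤ ∫⁻ x, ENNReal.ofReal (χ x) ∂lam := h χ ⟨hχ.1, hχ.2.1, hχ.2.2.trans hUΩ⟩ h01
      _ ≤ ∫⁻ x, U.indicator 1 x ∂lam := lintegral_mono hupper
      _ = lam U := lintegral_indicator_one hU.measurableSet
  refine le_of_forall_gt fun r hr => ?_
  obtain ⟨U, hAU, hU, hUr⟩ := A.exists_isOpen_lt_of_lt r hr
  calc μ A ≤ μ (U ∩ Ω) := measure_mono (subset_inter hAU hA)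
    _ ≤ lam (U ∩ Ω) := hopen _ (hU.inter hΩ) inter_subset_right
    _ ≤ lam U := measure_mono inter_subset_left
    _ < r := hUr

end TestFunctions

section SmoothApproximation

theorem norm_inv_max_one_smul_sub_le {F : Type*} [NormedAddCommGroup F] [NormedSpace ℝ F]
    {a b : F} (ha : ‖a‖ ≤ 1) : ‖(max 1 ‖b‖)⁻¹ • b - b‖ ≤ ‖b - a‖ := by
  rcases le_total ‖b‖ 1 with hb | hb
  · simp [max_eq_left hb]
  have hb0 : 0 < ‖b‖ := one_pos.trans_le hb
  calc ‖(max 1 ‖b‖)⁻¹ • b - b‖ = ‖(1 - ‖b‖⁻¹) • b‖ := by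
        rw [max_eq_right hb, norm_sub_rev, sub_smul, one_smul]
    _ = ‖b‖ - 1 := by
        rw [norm_smul, Real.norm_of_nonneg (sub_nonneg.2 (inv_le_one_of_one_le₀ hb)), sub_mul,
          inv_mul_cancel₀ hb0.ne', one_mul]
    _ ≤ ‖b‖ - ‖a‖ := by gcongr
    _ ≤ ‖b - a‖ := norm_sub_norm_le b a

variable {E F : Type*} [NormedAddCommGroup E] [NormedSpace ℝ E] [FiniteDimensional ℝ E]
  [NormedAddCommGroup F] [NormedSpace ℝ F]

theorem exists_contDiff_norm_le_one_norm_sub_le {g : E → F} (hg : Continuous g)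
    (hg1 : ∀ x, ‖g x‖ ≤ 1) {ε : ℝ} (hε : 0 < ε) :
    ∃ Φ : E → F, ContDiff ℝ (⊤ : ℕ∞) Φ ∧ (∀ x, ‖Φ x‖ ≤ 1) ∧ ∀ x, ‖Φ x - g x‖ ≤ ε := by
  obtain ⟨Φ, hΦ⟩ := exists_contMDiffMap_forall_mem_convex_of_local_const (n := (⊤ : ℕ∞))
    (modelWithCornersSelf ℝ E) (t := fun x => closedBall 0 1 ∩ closedBall (g x) ε)
    (fun x => (convex_closedBall _ _).inter (convex_closedBall _ _))
    fun x => ⟨g x, by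
      filter_upwards [hg.continuousAt.preimage_mem_nhds (closedBall_mem_nhds (g x) hε)] with y hy
      exact ⟨by simpa using hg1 x, mem_closedBall_comm.1 hy⟩⟩
  exact ⟨Φ, Φ.contMDiff.contDiff, fun x => by simpa using (hΦ x).1,
    fun x => by simpa [dist_eq_norm] using (hΦ x).2⟩

variable [MeasurableSpace E] [BorelSpace E]

theorem exists_contDiff_norm_le_one_integral_sub_le {μ : Measure E} [IsFiniteMeasure μ]
    {h : E → F} (hm : AEStronglyMeasurable h μ) (h1 : ∀ x, ‖h x‖ ≤ 1) {ε : ℝ} (hε : 0 < ε) :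
    ∃ Φ : E → F, ContDiff ℝ (⊤ : ℕ∞) Φ ∧ (∀ x, ‖Φ x‖ ≤ 1) ∧ ∫ x, ‖Φ x - h x‖ ∂μ ≤ ε := by
  have hh : Integrable h μ := .of_bound hm 1 (.of_forall h1)
  set δ : ℝ := ε / (μ.real univ + 2) with hδ
  have hpos : 0 < μ.real univ + 2 := by positivity
  have hδ0 : 0 < δ := div_pos hε hpos
  obtain ⟨b, hb, hbi⟩ := hh.exists_boundedContinuous_integral_sub_le hδ0
  obtain ⟨Φ, hΦ, hΦ1, hΦb⟩ := exists_contDiff_norm_le_one_norm_sub_le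
    (g := fun x => (max 1 ‖b x‖)⁻¹ • b x)
    (((by fun_prop : Continuous fun x => max 1 ‖b x‖).inv₀ fun x => by positivity).smul
      b.continuous)
    (fun x => by
      rw [norm_smul, norm_inv, Real.norm_of_nonneg (by positivity)]
      exact inv_mul_le_one_of_le₀ (le_max_right _ _) (by positivity)) hδ0
  have hpt : ∀ x, ‖Φ x - h x‖ ≤ δ + 2 * ‖h x - b x‖ := fun x =>
    calc ‖Φ x - h x‖
        ≤ ‖Φ x - (max 1 ‖b x‖)⁻¹ • b x‖ + ‖(max 1 ‖b x‖)⁻¹ • b x - b x‖ + ‖b x - h x‖ := by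
          simpa using norm_add₃_le (a := Φ x - (max 1 ‖b x‖)⁻¹ • b x)
            (b := (max 1 ‖b x‖)⁻¹ • b x - b x) (c := b x - h x)
      _ ≤ δ + ‖b x - h x‖ + ‖b x - h x‖ := by
          gcongr
          exacts [hΦb x, norm_inv_max_one_smul_sub_le (h1 x)]
      _ = δ + 2 * ‖h x - b x‖ := by rw [norm_sub_rev (b x)]; ring
  have hint : Integrable (fun x => ‖h x - b x‖) μ := (hh.sub hbi).norm
  refine ⟨Φ, hΦ, hΦ1, ?_⟩
  calc ∫ x, ‖Φ x - h x‖ ∂μ ≤ ∫ x, (δ + 2 * ‖h x - b x‖) ∂μ :=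
        integral_mono_of_nonneg (.of_forall fun _ => norm_nonneg _)
          ((integrable_const δ).add (hint.const_mul 2)) (.of_forall hpt)
    _ = μ.real univ * δ + 2 * ∫ x, ‖h x - b x‖ ∂μ := by
        rw [integral_add (integrable_const δ) (hint.const_mul 2), integral_const, smul_eq_mul,
          integral_const_mul]
    _ ≤ μ.real univ * δ + 2 * δ := by gcongr
    _ = ε := by rw [hδ]; field_simp

end SmoothApproximation

section Duality

open scoped RealInnerProductSpace

variable {E F : Type*} [NormedAddCommGroup E] [NormedSpace ℝ E] [FiniteDimensional ℝ E]
  [MeasurableSpace E] [BorelSpace E] [NormedAddCommGroup F] [InnerProductSpace ℝ F]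

theorem real_inner_inv_norm_smul_self (a : F) : ⟪‖a‖⁻¹ • a, a⟫ = ‖a‖ := by
  rcases eq_or_ne a 0 with rfl | ha
  · simp
  · rw [real_inner_smul_left, real_inner_self_eq_norm_sq]
    field_simp

theorem integral_norm_le_of_forall_contDiff {μ : Measure E} {H : E → F} (hH : Integrable H μ)
    {M : ℝ} (hM : ∀ Φ : E → F, ContDiff ℝ (⊤ : ℕ∞) Φ → (∀ x, ‖Φ x‖ ≤ 1) →
      ∫ x, ⟪Φ x, H x⟫ ∂μ ≤ M) : ∫ x, ‖H x‖ ∂μ ≤ M := by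
  set h : E → F := fun x => ‖H x‖⁻¹ • H x
  have hm : AEStronglyMeasurable h μ := hH.1.norm.inv₀.smul hH.1
  have h1 : ∀ x, ‖h x‖ ≤ 1 := fun x => by
    rw [norm_smul, norm_inv, norm_norm]
    exact inv_mul_le_one
  have hweight : AEMeasurable (fun x => ‖H x‖₊) μ := hH.1.nnnorm.aemeasurable
  have : IsFiniteMeasure (μ.withDensity fun x => ‖H x‖₊) := isFiniteMeasure_withDensity hH.2.ne
  have hinner : ∀ {Ψ : E → F}, AEStronglyMeasurable Ψ μ → (∀ x, ‖Ψ x‖ ≤ 1) →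
      Integrable (fun x => ⟪Ψ x, H x⟫) μ := fun hΨ hΨ1 =>
    hH.norm.mono' (hΨ.inner hH.1) (.of_forall fun x =>
      (norm_inner_le_norm _ _).trans (mul_le_of_le_one_left (norm_nonneg _) (hΨ1 x)))
  refine le_of_forall_pos_le_add fun ε hε => ?_
  obtain ⟨Φ, hΦ, hΦ1, hΦh⟩ := exists_contDiff_norm_le_one_integral_sub_le
    (hm.mono_ac (withDensity_absolutelyContinuous μ fun x => ‖H x‖₊)) h1 hε
  simp only [integral_withDensity_eq_integral_smul₀ hweight, NNReal.smul_def, coe_nnnorm,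
    smul_eq_mul] at hΦh
  have hΦm : AEStronglyMeasurable Φ μ := hΦ.continuous.aestronglyMeasurable
  have herr : Integrable (fun x => ‖H x‖ * ‖Φ x - h x‖) μ := by
    refine (hH.norm.mul_const 2).mono' (hH.1.norm.mul (hΦm.sub hm).norm) (.of_forall fun x => ?_)
    rw [norm_mul, norm_norm, norm_norm]
    gcongr
    linarith [norm_sub_le (Φ x) (h x), hΦ1 x, h1 x]
  calc ∫ x, ‖H x‖ ∂μ ≤ ∫ x, (⟪Φ x, H x⟫ + ‖H x‖ * ‖Φ x - h x‖) ∂μ := by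
        refine integral_mono hH.norm ((hinner hΦm hΦ1).add herr) fun x => ?_
        have := real_inner_le_norm (h x - Φ x) (H x)
        rw [inner_sub_left, real_inner_inv_norm_smul_self, norm_sub_rev, mul_comm] at this
        exact sub_le_iff_le_add'.1 this
    _ = ∫ x, ⟪Φ x, H x⟫ ∂μ + ∫ x, ‖H x‖ * ‖Φ x - h x‖ ∂μ :=
        integral_add (hinner hΦm hΦ1) herr
    _ ≤ M + ε := add_le_add (hM Φ hΦ hΦ1) hΦh

end Duality

section TestFields

open scoped RealInnerProductSpace

variable {n : ℕ} {Ω : Set (En n)}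

/-- A smooth vector field compactly supported inside `Ω`. -/
def SmoothTestField (Ω : Set (En n)) (Φ : En n → En n) : Prop :=
  ContDiff ℝ (⊤ : ℕ∞) Φ ∧ HasCompactSupport Φ ∧ tsupport Φ ⊆ Ω

theorem SmoothTest.smul_contDiff {χ : En n → ℝ} (hχ : SmoothTest Ω χ) {Φ : En n → En n}
    (hΦ : ContDiff ℝ (⊤ : ℕ∞) Φ) : SmoothTestField Ω fun x => χ x • Φ x :=
  ⟨hχ.1.smul hΦ, hχ.2.1.smul_right, (tsupport_smul_subset_left χ Φ).trans hχ.2.2⟩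

theorem lintegral_enorm_le_of_forall_smoothTestField (hΩ : IsOpen Ω) {ν : Measure (En n)}
    (hν : ν Ωᶜ = 0) {H : En n → En n} (hH : LocallyIntegrableOn H Ω ν) {M : ℝ}
    (hM : ∀ Φ, SmoothTestField Ω Φ → (∀ x, ‖Φ x‖ ≤ 1) → ∫ x, ⟪Φ x, H x⟫ ∂ν ≤ M) :
    ∫⁻ x, ‖H x‖ₑ ∂ν ≤ ENNReal.ofReal M := by
  refine lintegral_le_of_forall_isCompact hΩ hν fun C hC hCΩ => ?_
  obtain ⟨χ, hχ, h01, hone⟩ := exists_smoothTest_eqOn_one hC hΩ hCΩ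
  have hHχ : Integrable (fun x => χ x • H x) ν := by
    have hsupp := hH.integrableOn_compact_subset hχ.2.2 hχ.2.1
    refine (integrableOn_iff_integrable_of_support_subset (s := tsupport χ) ?_).1
      (hsupp.bdd_smul 1 hχ.1.continuous.aestronglyMeasurable
        (.of_forall fun x => by simpa [abs_of_nonneg (h01 x).1] using (h01 x).2))
    exact (Function.support_smul_subset_left χ H).trans (subset_tsupport χ)
  have hbound : ∫ x, ‖χ x • H x‖ ∂ν ≤ M := by
    refine integral_norm_le_of_forall_contDiff hHχ fun Φ hΦ hΦ1 => ?_
    simp only [real_inner_smul_right, ← real_inner_smul_left]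
    refine hM _ (hχ.smul_contDiff hΦ) fun x => ?_
    rw [norm_smul, Real.norm_of_nonneg (h01 x).1]
    exact mul_le_one₀ (h01 x).2 (norm_nonneg _) (hΦ1 x)
  calc ∫⁻ x in C, ‖H x‖ₑ ∂ν = ∫⁻ x in C, ‖χ x • H x‖ₑ ∂ν :=
        setLIntegral_congr_fun hC.measurableSet fun x hx => by simp [hone x hx]
    _ ≤ ∫⁻ x, ‖χ x • H x‖ₑ ∂ν := setLIntegral_le_lintegral C _
    _ = ENNReal.ofReal (∫ x, ‖χ x • H x‖ ∂ν) := (ofReal_integral_norm_eq_lintegral_enorm hHχ).symm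
    _ ≤ ENNReal.ofReal M := ENNReal.ofReal_le_ofReal hbound

end TestFields

section Mollification

variable {E V : Type*} [NormedAddCommGroup E] [NormedSpace ℝ E] [HasContDiffBump E]
  [MeasurableSpace E] [BorelSpace E] [FiniteDimensional ℝ E] [NormedAddCommGroup V]
  [NormedSpace ℝ V] (ρ : ContDiffBump (0 : E)) (μ : Measure E)
  [μ.IsAddHaarMeasure]

open scoped Convolution

/-- The mollification of `u` by the bump function `ρ`, normalised to have integral `1`. -/
def mollify (u : E → V) : E → V := ρ.normed μ ⋆[ContinuousLinearMap.lsmul ℝ ℝ, μ] u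

theorem mollify_apply (u : E → V) (x : E) :
    mollify ρ μ u x = ∫ y, ρ.normed μ (x - y) • u y ∂μ := by
  rw [mollify, convolution_eq_swap]
  rfl

theorem contDiff_mollify {u : E → V} (hu : LocallyIntegrable u μ) :
    ContDiff ℝ (⊤ : ℕ∞) (mollify ρ μ u) :=
  ρ.hasCompactSupport_normed.contDiff_convolution_left _ ρ.contDiff_normed hu

theorem integrable_normed_smul {u : E → V} (hu : LocallyIntegrable u μ) (x : E) :
    Integrable (fun y => ρ.normed μ (x - y) • u y) μ :=
  (ρ.hasCompactSupport_normed.convolutionExists_left (ContinuousLinearMap.lsmul ℝ ℝ)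
    ρ.continuous_normed hu x).integrable_swap

theorem tsupport_mollify_subset (u : E → V) :
    tsupport (mollify ρ μ u) ⊆ cthickening ρ.rOut (tsupport u) := by
  refine closure_minimal (fun x hx => ?_) isClosed_cthickening
  obtain ⟨y, hy, z, hz, rfl⟩ := support_convolution_subset_swap _ hx
  rw [ρ.support_normed_eq, mem_ball_zero_iff] at hz
  refine mem_cthickening_of_dist_le _ y _ _ (subset_tsupport u hy) ?_
  simpa using hz.le

theorem integral_normed_sub_left (x : E) : ∫ y, ρ.normed μ (x - y) ∂μ = 1 := by
  rw [integral_sub_left_eq_self (ρ.normed μ), ρ.integral_normed]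

theorem norm_normed_smul_le_indicator {K : ℝ} (hK : ρ.rOut ≤ K * ρ.rIn) {x y : E}
    (hy : y ∈ ball x ρ.rOut) (u : E → V) (s : E) :
    ‖ρ.normed μ (y - s) • u s‖ ≤ (ball x (2 * ρ.rOut)).indicator
      (fun s => K ^ Module.finrank ℝ E / μ.real (closedBall 0 ρ.rOut) * ‖u s‖) s := by
  by_cases hs : s ∈ ball x (2 * ρ.rOut)
  · rw [indicator_of_mem hs, norm_smul, Real.norm_of_nonneg (ρ.nonneg_normed _)]
    gcongr
    exact ρ.normed_le_div_measure_closedBall_rOut μ K hK _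
  · have hsub : ball y ρ.rOut ⊆ ball x (2 * ρ.rOut) :=
      ball_subset_ball' (by linarith [mem_ball.1 hy])
    have hzero : ρ.normed μ (y - s) = 0 := by
      refine Function.notMem_support.1 fun h => hs (hsub ?_)
      rwa [ρ.support_normed_eq, mem_ball_zero_iff, ← dist_eq_norm, ← mem_ball, mem_ball_comm]
        at h
    rw [indicator_of_notMem hs, hzero, zero_smul, norm_zero]

variable [CompleteSpace V]

theorem clm_mollify {W : Type*} [NormedAddCommGroup W] [NormedSpace ℝ W] [CompleteSpace W]
    (T : V →L[ℝ] W) {u : E → V} (hu : LocallyIntegrable u μ) (x : E) :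
    T (mollify ρ μ u x) = mollify ρ μ (fun y => T (u y)) x := by
  simp only [mollify_apply, ← T.integral_comp_comm (integrable_normed_smul ρ μ hu x), map_smul]

theorem dist_mollify_le {u : E → V} (hu : AEStronglyMeasurable u μ) {x : E} {z : V} {ε : ℝ}
    (hε : 0 ≤ ε) (h : ∀ y ∈ ball x ρ.rOut, dist (u y) z ≤ ε) : dist (mollify ρ μ u x) z ≤ ε :=
  dist_convolution_le hε ρ.support_normed_eq.subset ρ.nonneg_normed ρ.integral_normed hu h

theorem norm_mollify_le {u : E → V} (hu : AEStronglyMeasurable u μ) {C : ℝ}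
    (hC : ∀ x, ‖u x‖ ≤ C) (x : E) : ‖mollify ρ μ u x‖ ≤ C := by
  simpa using dist_mollify_le ρ μ hu (z := 0) ((norm_nonneg _).trans (hC x))
    fun y _ => by simpa using hC y

/-- A normalised bump function is even, so mollification is self-adjoint. -/
theorem integral_mul_mollify {h u : E → ℝ} (hh : Integrable h μ) (hu : Integrable u μ) :
    ∫ x, h x * mollify ρ μ u x ∂μ = ∫ x, mollify ρ μ h x * u x ∂μ := by
  obtain ⟨C, hC⟩ := ρ.hasCompactSupport_normed.exists_bound_of_continuous
    (ρ.continuous_normed (μ := μ))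
  have hcont : Continuous fun p : E × E => ρ.normed μ (p.1 - p.2) :=
    ρ.continuous_normed.comp (continuous_fst.sub continuous_snd)
  have hint : Integrable (Function.uncurry fun x y => h x * (ρ.normed μ (x - y) * u y))
      (μ.prod μ) := by
    refine ((hh.mul_prod hu).bdd_mul (c := C) hcont.aestronglyMeasurable
      (.of_forall fun p => hC _)).congr (.of_forall fun p => ?_)
    simp only [Function.uncurry]
    ring
  simp only [mollify_apply, smul_eq_mul, ← integral_const_mul, ← integral_mul_const]
  rw [integral_integral_swap hint]
  refine integral_congr_ae (.of_forall fun y => integral_congr_ae (.of_forall fun x => ?_))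
  simp only
  rw [← ρ.normed_neg (y - x), neg_sub]
  ring

theorem fderiv_mollify {ψ : E → ℝ} (hψ : ContDiff ℝ 1 ψ) (hc : HasCompactSupport ψ) (x v : E) :
    fderiv ℝ (mollify ρ μ ψ) x v = mollify ρ μ (fun y => fderiv ℝ ψ y v) x := by
  have hρ : LocallyIntegrable (ρ.normed μ) μ := ρ.continuous_normed.locallyIntegrable
  rw [mollify, (hc.hasFDerivAt_convolution_right (ContinuousLinearMap.lsmul ℝ ℝ) hρ hψ x).fderiv,
    convolution_precompR_apply _ hρ (hc.fderiv (𝕜 := ℝ)) (hψ.continuous_fderiv one_ne_zero)]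
  rfl

theorem norm_mollify_sub_le {u : E → V} (hu : LocallyIntegrable u μ) {K : ℝ}
    (hK : ρ.rOut ≤ K * ρ.rIn) {x y : E} (hy : y ∈ ball x ρ.rOut) (z : V) :
    ‖mollify ρ μ u y - z‖ ≤ (2 * K) ^ Module.finrank ℝ E *
      ((∫ s in ball x (2 * ρ.rOut), ‖u s - z‖ ∂μ) / (μ (ball x (2 * ρ.rOut))).toReal) := by
  set d := Module.finrank ℝ E
  set c : ℝ := K ^ d / μ.real (closedBall 0 ρ.rOut) with hc
  have hint : IntegrableOn (fun s => ‖u s - z‖) (ball x (2 * ρ.rOut)) μ :=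
    (((hu.integrableOn_isCompact (isCompact_closedBall x _)).mono_set ball_subset_closedBall).sub
      (integrableOn_const measure_ball_lt_top.ne)).norm
  have hvol : (μ (ball x (2 * ρ.rOut))).toReal = 2 ^ d * μ.real (closedBall 0 ρ.rOut) := by
    rw [Measure.addHaar_ball_mul_of_pos μ x two_pos, Measure.real,
      Measure.addHaar_closedBall _ _ ρ.rOut_pos.le,
      ← Measure.addHaar_ball_of_pos μ (0 : E) ρ.rOut_pos]
    simp [d]
  have hvol0 : 0 < μ.real (closedBall (0 : E) ρ.rOut) :=
    ENNReal.toReal_pos (measure_closedBall_pos μ _ ρ.rOut_pos).ne' measure_closedBall_lt_top.ne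
  calc ‖mollify ρ μ u y - z‖ = ‖∫ s, ρ.normed μ (y - s) • (u s - z) ∂μ‖ := by
        simp only [smul_sub]
        rw [integral_sub (integrable_normed_smul ρ μ hu y)
            (integrable_normed_smul ρ μ (locallyIntegrable_const z) y), integral_smul_const,
          integral_normed_sub_left, one_smul, mollify_apply]
    _ ≤ ∫ s, (ball x (2 * ρ.rOut)).indicator (fun s => c * ‖u s - z‖) s ∂μ :=
        norm_integral_le_of_norm_le
          ((integrable_indicator_iff measurableSet_ball).2 (hint.const_mul c))
          (.of_forall (norm_normed_smul_le_indicator ρ μ hK hy fun s => u s - z))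
    _ = c * ∫ s in ball x (2 * ρ.rOut), ‖u s - z‖ ∂μ := by
        rw [integral_indicator measurableSet_ball, integral_const_mul]
    _ = _ := by
        rw [hvol, hc, mul_pow]
        field_simp

end Mollification

section ShrinkingMollifiers

variable {E V : Type*} [NormedAddCommGroup E] [NormedSpace ℝ E]

/-- A sequence of bump functions centred at the origin whose supports shrink to a point. -/
def shrinkingBump (E : Type*) [NormedAddCommGroup E] [NormedSpace ℝ E] (m : ℕ) :
    ContDiffBump (0 : E) where
  rIn := 1 / (m + 1) / 2
  rOut := 1 / (m + 1)
  rIn_pos := by positivity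
  rIn_lt_rOut := half_lt_self (by positivity)

theorem shrinkingBump_rOut_eq (m : ℕ) :
    (shrinkingBump E m).rOut = 2 * (shrinkingBump E m).rIn := by
  simp only [shrinkingBump]
  ring

theorem tendsto_shrinkingBump_rOut :
    Tendsto (fun m => (shrinkingBump E m).rOut) atTop (𝓝 0) :=
  tendsto_one_div_add_atTop_nhds_zero_nat

/-- Convergence of `(m, y)` along this filter means that `m → ∞` while `y` stays in the ball about
`x` over which the `m`-th mollification at `x` averages. -/
def mollifierNhds (x : E) : Filter (ℕ × E) :=
  comap Prod.fst atTop ⊓ 𝓟 {p | p.2 ∈ ball x (shrinkingBump E p.1).rOut}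

theorem eventually_mollifierNhds {x : E} {P : ℕ × E → Prop} :
    (∀ᶠ p in mollifierNhds x, P p) ↔
      ∀ᶠ m in atTop, ∀ y ∈ ball x (shrinkingBump E m).rOut, P (m, y) := by
  simp only [mollifierNhds, eventually_inf_principal, eventually_comap, Prod.forall, mem_ofPred_eq]
  refine eventually_congr (.of_forall fun m => ⟨fun h y => h m y rfl, ?_⟩)
  rintro h _ y rfl
  exact h y

theorem tendsto_fst_mollifierNhds (x : E) : Tendsto Prod.fst (mollifierNhds x) atTop :=
  tendsto_comap.mono_left inf_le_left

theorem tendsto_snd_mollifierNhds (x : E) : Tendsto Prod.snd (mollifierNhds x) (𝓝 x) := by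
  refine Metric.tendsto_nhds.2 fun ε hε => eventually_mollifierNhds.2 ?_
  filter_upwards [(tendsto_shrinkingBump_rOut (E := E)).eventually (gt_mem_nhds hε)] with m hm y hy
  exact (mem_ball.1 hy).trans hm

theorem tendsto_mk_mollifierNhds (x : E) :
    Tendsto (fun m : ℕ => (m, x)) atTop (mollifierNhds x) := by
  refine tendsto_inf.2 ⟨tendsto_comap_iff.2 tendsto_id,
    tendsto_principal.2 (.of_forall fun m => ?_)⟩
  exact mem_ball_self (shrinkingBump E m).rOut_pos

variable [HasContDiffBump E] [MeasurableSpace E] [BorelSpace E] [FiniteDimensional ℝ E]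
  [NormedAddCommGroup V] [NormedSpace ℝ V] [CompleteSpace V]

theorem tendsto_mollify_of_tendsto (μ : Measure E) [μ.IsAddHaarMeasure] {ψ : ℕ → E → V}
    (hψ : ∀ m, AEStronglyMeasurable (ψ m) μ) {x : E} {z : V}
    (h : Tendsto (fun p : ℕ × E => ψ p.1 p.2) (mollifierNhds x) (𝓝 z)) :
    Tendsto (fun m => mollify (shrinkingBump E m) μ (ψ m) x) atTop (𝓝 z) := by
  refine (nhds_basis_closedBall.tendsto_right_iff).2 fun ε hε => ?_
  filter_upwards [eventually_mollifierNhds.1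
    (h.eventually (closedBall_mem_nhds z hε))] with m hm
  exact dist_mollify_le _ μ (hψ m) hε.le hm

theorem ae_tendsto_mollify (μ : Measure E) [μ.IsAddHaarMeasure] {u : E → V}
    (hu : LocallyIntegrable u μ) :
    ∀ᵐ x ∂μ, Tendsto (fun m => mollify (shrinkingBump E m) μ u x) atTop (𝓝 (u x)) :=
  ContDiffBump.ae_convolution_tendsto_right_of_locallyIntegrable tendsto_shrinkingBump_rOut
    (.of_forall fun m => (shrinkingBump_rOut_eq m).le) hu

end ShrinkingMollifiers

section ApproximateLimits

variable {n m : ℕ} {Ω : Set (En n)} {f g : En n → En m} {x : En n} {z w : En m}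

theorem ApproxLimAt.congr (h : ApproxLimAt f x z) (hfg : f =ᶠ[𝓝 x] g) : ApproxLimAt g x z := by
  obtain ⟨ε, hε, hball⟩ := Metric.eventually_nhds_iff_ball.1 hfg
  refine Tendsto.congr' ?_ h
  filter_upwards [mem_nhdsWithin_of_mem_nhds (Iio_mem_nhds hε)] with r hr
  congr 1
  refine setIntegral_congr_fun measurableSet_ball fun y hy => ?_
  rw [hball y (ball_subset_ball (le_of_lt hr) hy)]

theorem ApproxLimAt.tendsto_mollify (h : ApproxLimAt f x z) (hf : LocallyIntegrable f) :
    Tendsto (fun p : ℕ × En n => mollify (shrinkingBump (En n) p.1) volume f p.2)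
      (mollifierNhds x) (𝓝 z) := by
  have hr : Tendsto (fun k => 2 * (shrinkingBump (En n) k).rOut) atTop (𝓝[>] 0) :=
    tendsto_nhdsWithin_iff.2 ⟨by simpa using tendsto_shrinkingBump_rOut.const_mul 2,
      .of_forall fun k => mul_pos two_pos (shrinkingBump (En n) k).rOut_pos⟩
  have hosc := (h.comp (hr.comp (tendsto_fst_mollifierNhds x))).const_mul
    ((2 * 2 : ℝ) ^ Module.finrank ℝ (En n))
  rw [mul_zero] at hosc
  refine tendsto_iff_norm_sub_tendsto_zero.2
    (squeeze_zero' (.of_forall fun _ => norm_nonneg _) ?_ hosc)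
  exact eventually_mollifierNhds.2 (.of_forall fun k y hy =>
    norm_mollify_sub_le _ volume hf (shrinkingBump_rOut_eq k).le hy z)

theorem ApproxLimAt.tendsto_mollify_apply (h : ApproxLimAt f x z) (hf : LocallyIntegrable f) :
    Tendsto (fun k => mollify (shrinkingBump (En n) k) volume f x) atTop (𝓝 z) := by
  have hcomp := (h.tendsto_mollify hf).comp (tendsto_mk_mollifierNhds x)
  exact hcomp

theorem exists_locallyIntegrable_eventuallyEq (hΩ : IsOpen Ω) (hf : LocallyIntegrableOn f Ω)
    {C : Set (En n)} (hC : IsCompact C) (hCΩ : C ⊆ Ω) :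
    ∃ u : En n → En m, LocallyIntegrable u ∧ ∀ x ∈ C, f =ᶠ[𝓝 x] u := by
  obtain ⟨D, hD, hCD, hDΩ⟩ := exists_compact_between hC hΩ hCΩ
  refine ⟨D.indicator f, ((hf.integrableOn_compact_subset hDΩ hD).integrable_indicator
    hD.measurableSet).locallyIntegrable, fun x hx => ?_⟩
  filter_upwards [isOpen_interior.mem_nhds (hCD hx)] with y hy
  rw [indicator_of_mem (interior_subset hy)]

theorem ApproxLimAt.unique (hΩ : IsOpen Ω) (hf : LocallyIntegrableOn f Ω) (hx : x ∈ Ω)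
    (hz : ApproxLimAt f x z) (hw : ApproxLimAt f x w) : z = w := by
  obtain ⟨u, hu, hfu⟩ := exists_locallyIntegrable_eventuallyEq hΩ hf isCompact_singleton
    (singleton_subset_iff.2 hx)
  exact tendsto_nhds_unique ((hz.congr (hfu x rfl)).tendsto_mollify_apply hu)
    ((hw.congr (hfu x rfl)).tendsto_mollify_apply hu)

theorem aemeasurable_of_ae_approxLimAt (hf : LocallyIntegrable f) {F : En n → En m}
    {ν : Measure (En n)} (hF : ∀ᵐ x ∂ν, ApproxLimAt f x (F x)) : AEMeasurable F ν :=
  aemeasurable_of_tendsto_metrizable_ae atTop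
    (fun k => (contDiff_mollify (shrinkingBump (En n) k) volume hf).continuous.aemeasurable)
    (hF.mono fun _ hx => hx.tendsto_mollify_apply hf)

open scoped Classical in
/-- The precise representative `f̃`: the approximate limit of `f` where it exists, and `0`
elsewhere. -/
def preciseRep (f : En n → En m) (x : En n) : En m :=
  if h : ∃ z, ApproxLimAt f x z then h.choose else 0

theorem approxLimAt_preciseRep (h : ∃ z, ApproxLimAt f x z) : ApproxLimAt f x (preciseRep f x) := by
  rw [preciseRep, dif_pos h]
  exact h.choose_spec

theorem tildePreimage_inter_subset (hΩ : IsOpen Ω) (hf : LocallyIntegrableOn f Ω)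
    (A : Set (En m)) : tildePreimage f A ∩ Ω ⊆ preciseRep f ⁻¹' A := by
  rintro x ⟨⟨z, hzA, hz⟩, hx⟩
  rwa [mem_preimage, ← hz.unique hΩ hf hx (approxLimAt_preciseRep ⟨z, hz⟩)]

theorem aemeasurable_preciseRep (hΩ : IsOpen Ω) (hf : LocallyIntegrableOn f Ω)
    {ν : Measure (En n)} (hν : ν Ωᶜ = 0) (hjump : NoJumpPart f ν) :
    AEMeasurable (preciseRep f) ν := by
  have : LocallyCompactSpace Ω := hΩ.locallyCompactSpace
  obtain ⟨C, hC, hCΩ⟩ : IsSigmaCompact Ω := isSigmaCompact_iff_sigmaCompactSpace.2 inferInstance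
  rw [← Measure.restrict_eq_self_of_ae_mem (mem_ae_iff.2 hν), ← hCΩ, aemeasurable_iUnion_iff]
  intro k
  obtain ⟨u, hu, hfu⟩ := exists_locallyIntegrable_eventuallyEq hΩ hf (hC k)
    (hCΩ ▸ subset_iUnion C k)
  refine aemeasurable_of_ae_approxLimAt hu ?_
  filter_upwards [ae_restrict_mem (hC k).measurableSet,
    ae_restrict_of_ae (compl_mem_ae_iff.2 hjump)] with x hxC hx
  exact (approxLimAt_preciseRep (not_not.1 hx)).congr (hfu x hxC)

end ApproximateLimits

section SmoothTestFunctions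

variable {n : ℕ} {Ω Ω' : Set (En n)} {φ g : En n → ℝ}

theorem SmoothTest.mono (hφ : SmoothTest Ω φ) (hΩ : Ω ⊆ Ω') : SmoothTest Ω' φ :=
  ⟨hφ.1, hφ.2.1, hφ.2.2.trans hΩ⟩

theorem SmoothTest.eq_zero (hφ : SmoothTest Ω φ) {x : En n} (hx : x ∉ Ω) : φ x = 0 :=
  image_eq_zero_of_notMem_tsupport fun h => hx (hφ.2.2 h)

theorem SmoothTest.integrable (hφ : SmoothTest Ω φ) {μ : Measure (En n)}
    [IsFiniteMeasureOnCompacts μ] : Integrable φ μ :=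
  hφ.1.continuous.integrable_of_hasCompactSupport hφ.2.1

theorem SmoothTest.exists_norm_le (hφ : SmoothTest Ω φ) : ∃ C, ∀ x, ‖φ x‖ ≤ C :=
  hφ.2.1.exists_bound_of_continuous hφ.1.continuous

theorem SmoothTest.mul_contDiff (hφ : SmoothTest Ω φ) (hg : ContDiff ℝ (⊤ : ℕ∞) g) :
    SmoothTest Ω fun x => φ x * g x :=
  ⟨hφ.1.mul hg, hφ.2.1.mul_right, (tsupport_mul_subset_left).trans hφ.2.2⟩

theorem contDiff_fderiv_apply {F : Type*} [NormedAddCommGroup F] [NormedSpace ℝ F] {w : En n → F}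
    (hw : ContDiff ℝ (⊤ : ℕ∞) w) (v : En n) : ContDiff ℝ (⊤ : ℕ∞) fun x => fderiv ℝ w x v :=
  (hw.fderiv_right (m := (⊤ : ℕ∞)) (by simp)).clm_apply contDiff_const

theorem SmoothTest.fderiv_apply (hφ : SmoothTest Ω φ) (v : En n) :
    SmoothTest Ω fun x => fderiv ℝ φ x v :=
  have hsupp := tsupport_fderiv_apply_subset ℝ v
  ⟨contDiff_fderiv_apply hφ.1 v, hφ.2.1.fderiv_apply ℝ v, hsupp.trans hφ.2.2⟩

theorem SmoothTest.setIntegral_mul (hφ : SmoothTest Ω φ) (h : En n → ℝ) (ν : Measure (En n)) :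
    ∫ x in Ω, φ x * h x ∂ν = ∫ x, φ x * h x ∂ν :=
  setIntegral_eq_integral_of_forall_compl_eq_zero fun x hx => by rw [hφ.eq_zero hx, zero_mul]

theorem SmoothTest.setIntegral_mul_fderiv (hφ : SmoothTest Ω φ) (u : En n → ℝ) (v : En n) :
    ∫ x in Ω, u x * fderiv ℝ φ x v = ∫ x, u x * fderiv ℝ φ x v := by
  simpa only [mul_comm] using (hφ.fderiv_apply v).setIntegral_mul u volume

theorem SmoothTest.integral_mul_fderiv_congr (hφ : SmoothTest Ω φ) {u u' : En n → ℝ}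
    (hu : EqOn u u' Ω) (v : En n) :
    ∫ x, u x * fderiv ℝ φ x v = ∫ x, u' x * fderiv ℝ φ x v := by
  refine integral_congr_ae (.of_forall fun x => ?_)
  by_cases hx : x ∈ Ω
  · simp only [hu hx]
  · simp only [(hφ.fderiv_apply v).eq_zero hx, mul_zero]

theorem SmoothTest.integral_mul_fderiv (hφ : SmoothTest Ω φ) (hg : ContDiff ℝ (⊤ : ℕ∞) g)
    (v : En n) : ∫ x, g x * fderiv ℝ φ x v = -∫ x, φ x * fderiv ℝ g x v := by
  have hint : ∀ {a b : En n → ℝ}, SmoothTest Ω a → ContDiff ℝ (⊤ : ℕ∞) b →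
      Integrable fun x => b x * a x := fun ha hb => by
    simpa only [mul_comm] using (ha.mul_contDiff hb).integrable
  have hφ' := hφ.fderiv_apply v
  rw [integral_mul_fderiv_eq_neg_fderiv_mul_of_integrable
    (hint hφ (contDiff_fderiv_apply hg v)) (hint hφ' hg) (hint hφ hg)
    (fun x _ => (hg.differentiable (by simp)).differentiableAt)
    (fun x _ => (hφ.1.differentiable (by simp)).differentiableAt)]
  simp only [mul_comm]

end SmoothTestFunctions

section DistributionalGradients

variable {n m : ℕ} {Ω Ω' : Set (En n)} {u u' : En n → ℝ} {s : En n → En n} {ν : Measure (En n)}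

/-- The distributional gradient of `u` on `Ω` is the vector measure `s ⬝ ν`.  Test functions vanish
off `Ω`, so the integrals need not be restricted to `Ω`. -/
def HasDistribGradient (Ω : Set (En n)) (u : En n → ℝ) (s : En n → En n) (ν : Measure (En n)) :
    Prop :=
  ∀ φ, SmoothTest Ω φ → ∀ i,
    ∫ x, u x * fderiv ℝ φ x (EuclideanSpace.single i 1) = -∫ x, φ x * s x i ∂ν

theorem HasDistribGradient.congr_restrict (h : HasDistribGradient Ω u s ν) (hΩ : Ω' ⊆ Ω)
    (hu : EqOn u' u Ω') : HasDistribGradient Ω' u' s (ν.restrict Ω') := fun φ hφ i => by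
  rw [hφ.setIntegral_mul, ← h φ (hφ.mono hΩ) i, hφ.integral_mul_fderiv_congr hu]

theorem HasDistribGradient.integral_mul_fderiv_mollify (h : HasDistribGradient Ω u s ν)
    (hu : Integrable u) (ρ : ContDiffBump (0 : En n)) {ψ : En n → ℝ} (hψ : SmoothTest Ω ψ)
    (hρ : cthickening ρ.rOut (tsupport ψ) ⊆ Ω) (i : Fin n) :
    ∫ x, ψ x * fderiv ℝ (mollify ρ volume u) x (EuclideanSpace.single i 1) =
      ∫ x, mollify ρ volume ψ x * s x i ∂ν := by
  have hsupp := (tsupport_mollify_subset ρ volume ψ)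
  have htest : SmoothTest Ω (mollify ρ volume ψ) :=
    ⟨contDiff_mollify ρ volume hψ.integrable.locallyIntegrable,
      hψ.2.1.cthickening.of_isClosed_subset (isClosed_tsupport _) hsupp, hsupp.trans hρ⟩
  have hmoll := hψ.integral_mul_fderiv (contDiff_mollify ρ volume hu.locallyIntegrable)
    (EuclideanSpace.single i 1)
  rw [← neg_eq_iff_eq_neg.2 hmoll, ← neg_eq_iff_eq_neg.2 (h _ htest i), neg_inj]
  simp only [fderiv_mollify ρ volume (hψ.1.of_le (by exact_mod_cast le_top)) hψ.2.1]
  simpa only [mul_comm] using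
    integral_mul_mollify ρ volume (hψ.fderiv_apply (EuclideanSpace.single i 1)).integrable hu

theorem tendsto_integral_mollify_mul {ψ : ℕ → En n → ℝ} {C : ℝ} (hψ : ∀ j, Continuous (ψ j))
    (hC : ∀ j x, ‖ψ j x‖ ≤ C) {ψ₀ : En n → ℝ} (hlim : ∀ᵐ x ∂ν,
      Tendsto (fun p : ℕ × En n => ψ p.1 p.2) (mollifierNhds x) (𝓝 (ψ₀ x)))
    {h : En n → ℝ} (hh : Integrable h ν) :
    Tendsto (fun j => ∫ x, mollify (shrinkingBump (En n) j) volume (ψ j) x * h x ∂ν) atTop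
      (𝓝 (∫ x, ψ₀ x * h x ∂ν)) := by
  have hmeas := fun j => (hψ j).aestronglyMeasurable (μ := (volume : Measure (En n)))
  refine tendsto_integral_of_dominated_convergence (fun x => C * ‖h x‖) (fun j => ?_)
    (hh.norm.const_mul C) (fun j => .of_forall fun x => ?_) ?_
  · exact (contDiff_mollify _ volume (hψ j).locallyIntegrable).continuous.aestronglyMeasurable.mul
      hh.aestronglyMeasurable
  · rw [norm_mul]
    gcongr
    exact norm_mollify_le _ volume (hmeas j) (hC j) x
  · filter_upwards [hlim] with x hx
    exact (tendsto_mollify_of_tendsto volume hmeas hx).mul_const (h x)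

end DistributionalGradients

section ChainRule

variable {n m : ℕ} {Ω : Set (En n)} {f w : En n → En m} {s : Fin m → En n → En n}
  {ν : Measure (En n)} {G : En m → ℝ} {F : En n → En m} {φ : En n → ℝ}

/-- The density `∑ₖ ∂ₖG(F) sₖ` of the distributional gradient of `G ∘ f`, when that of the `k`-th
component of `f` has density `sₖ` and `F` is the precise representative of `f`. -/
def chainDensity (G : En m → ℝ) (F : En n → En m) (s : Fin m → En n → En n) (x : En n) : En n :=
  ∑ k, fderiv ℝ G (F x) (EuclideanSpace.single k 1) • s k x

theorem clm_apply_eq_sum (T : En m →L[ℝ] ℝ) (v : En m) :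
    T v = ∑ k, T (EuclideanSpace.single k 1) * v k := by
  conv_lhs => rw [← (EuclideanSpace.basisFun (Fin m) ℝ).sum_repr v]
  simp [mul_comm]

theorem fderiv_comp_eq_sum {x : En n} (hG : DifferentiableAt ℝ G (w x))
    (hw : DifferentiableAt ℝ w x) (v : En n) :
    fderiv ℝ (fun y => G (w y)) x v =
      ∑ k, fderiv ℝ G (w x) (EuclideanSpace.single k 1) * fderiv ℝ (fun y => w y k) x v := by
  have hcoord : ∀ k, fderiv ℝ (fun y => w y k) x v = fderiv ℝ w x v k := fun k => by
    exact congrArg (· v)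
      ((EuclideanSpace.proj k : En m →L[ℝ] ℝ).hasFDerivAt.comp x hw.hasFDerivAt).fderiv
  simp only [hcoord, ← clm_apply_eq_sum, fderiv_fun_comp x hG hw]
  rfl

theorem integral_comp_mollify_mul_fderiv (hf : Integrable f)
    (hs : ∀ k, HasDistribGradient Ω (fun x => f x k) (s k) ν) (ρ : ContDiffBump (0 : En n))
    (hφ : SmoothTest Ω φ) (hρ : cthickening ρ.rOut (tsupport φ) ⊆ Ω)
    (hG : ContDiff ℝ (⊤ : ℕ∞) G) (i : Fin n) :
    ∫ x, G (mollify ρ volume f x) * fderiv ℝ φ x (EuclideanSpace.single i 1) =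
      -∑ k, ∫ x, mollify ρ volume (fun y => φ y *
        fderiv ℝ G (mollify ρ volume f y) (EuclideanSpace.single k 1)) x * s k x i ∂ν := by
  set fρ := mollify ρ volume f
  have hfρ : ContDiff ℝ (⊤ : ℕ∞) fρ := contDiff_mollify ρ volume hf.locallyIntegrable
  have hcoord : ∀ k, (fun y => fρ y k) = mollify ρ volume fun y => f y k := fun k =>
    funext (clm_mollify ρ volume (EuclideanSpace.proj k : En m →L[ℝ] ℝ) hf.locallyIntegrable)
  have hfk : ∀ k, Integrable fun y => f y k := fun k =>
    (EuclideanSpace.proj k : En m →L[ℝ] ℝ).integrable_comp hf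
  have hψ : ∀ k, SmoothTest Ω fun y =>
      φ y * fderiv ℝ G (fρ y) (EuclideanSpace.single k 1) := fun k =>
    hφ.mul_contDiff ((contDiff_fderiv_apply hG _).comp hfρ)
  have hψρ : ∀ k, cthickening ρ.rOut (tsupport fun y =>
      φ y * fderiv ℝ G (fρ y) (EuclideanSpace.single k 1)) ⊆ Ω := fun k =>
    (cthickening_subset_of_subset _ tsupport_mul_subset_left).trans hρ
  have hibp := hφ.integral_mul_fderiv (hG.comp hfρ) (EuclideanSpace.single i 1)
  simp only [Function.comp_def] at hibp
  rw [hibp, neg_inj]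
  simp only [fderiv_comp_eq_sum ((hG.differentiable (by simp)).differentiableAt)
    ((hfρ.differentiable (by simp)).differentiableAt), Finset.mul_sum, ← mul_assoc, hcoord]
  rw [integral_finsetSum _ fun k _ => ((hψ k).mul_contDiff (contDiff_fderiv_apply
    (contDiff_mollify ρ volume (hfk k).locallyIntegrable) _)).integrable]
  exact Finset.sum_congr rfl fun k _ =>
    (hs k).integral_mul_fderiv_mollify (hfk k) ρ (hψ k) (hψρ k) i

theorem tendsto_integral_comp_mollify_mul_fderiv (hf : Integrable f) (hφ : SmoothTest Ω φ)
    (hG : SmoothTest univ G) (v : En n) :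
    Tendsto (fun j => ∫ x, G (mollify (shrinkingBump (En n) j) volume f x) * fderiv ℝ φ x v)
      atTop (𝓝 (∫ x, G (f x) * fderiv ℝ φ x v)) := by
  obtain ⟨C, hC⟩ := hG.exists_norm_le
  have hφ' := hφ.fderiv_apply v
  refine tendsto_integral_of_dominated_convergence (fun x => C * ‖fderiv ℝ φ x v‖) (fun j => ?_)
    (hφ'.integrable.norm.const_mul C) (fun j => .of_forall fun x => ?_) ?_
  · exact ((hG.1.continuous.comp (contDiff_mollify _ volume hf.locallyIntegrable).continuous).mul
      hφ'.1.continuous).aestronglyMeasurable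
  · rw [norm_mul]
    gcongr
    exact hC _
  · filter_upwards [ae_tendsto_mollify volume hf.locallyIntegrable] with x hx
    exact ((hG.1.continuous.tendsto _).comp hx).mul_const _

theorem tendsto_integral_mollify_mul_fderiv_mollify (hf : Integrable f) (hφ : SmoothTest Ω φ)
    (hG : SmoothTest univ G) (hF : ∀ᵐ x ∂ν, ApproxLimAt f x (F x)) {h : En n → ℝ}
    (hh : Integrable h ν) (v : En m) :
    Tendsto (fun j => ∫ x, mollify (shrinkingBump (En n) j) volume (fun y => φ y *
        fderiv ℝ G (mollify (shrinkingBump (En n) j) volume f y) v) x * h x ∂ν)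
      atTop (𝓝 (∫ x, φ x * fderiv ℝ G (F x) v * h x ∂ν)) := by
  obtain ⟨A, hA⟩ := hφ.exists_norm_le
  obtain ⟨B, hB⟩ := (hG.fderiv_apply v).exists_norm_le
  have hG' := (hG.fderiv_apply v).1.continuous
  refine tendsto_integral_mollify_mul (C := A * B) (ψ := fun j y => φ y *
    fderiv ℝ G (mollify (shrinkingBump (En n) j) volume f y) v) (fun j => ?_) (fun j x => ?_) ?_ hh
  · exact hφ.1.continuous.mul
      (hG'.comp (contDiff_mollify _ volume hf.locallyIntegrable).continuous)
  · rw [norm_mul]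
    exact mul_le_mul (hA x) (hB _) (norm_nonneg _) ((norm_nonneg _).trans (hA x))
  · filter_upwards [hF] with x hx
    exact ((hφ.1.continuous.tendsto x).comp (tendsto_snd_mollifierNhds x)).mul
      ((hG'.tendsto (F x)).comp (hx.tendsto_mollify hf.locallyIntegrable))

theorem HasDistribGradient.comp_of_integrable (hΩ : IsOpen Ω) (hf : Integrable f)
    (hs : ∀ k, HasDistribGradient Ω (fun x => f x k) (s k) ν) (hsν : ∀ k, Integrable (s k) ν)
    (hF : ∀ᵐ x ∂ν, ApproxLimAt f x (F x)) (hG : SmoothTest univ G) :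
    HasDistribGradient Ω (fun x => G (f x)) (chainDensity G F s) ν := fun φ hφ i => by
  have hsi : ∀ k, Integrable (fun x => s k x i) ν := fun k =>
    (EuclideanSpace.proj i : En n →L[ℝ] ℝ).integrable_comp (hsν k)
  have hlim : Tendsto (fun j => -∑ k, ∫ x, mollify (shrinkingBump (En n) j) volume (fun y =>
        φ y * fderiv ℝ G (mollify (shrinkingBump (En n) j) volume f y)
          (EuclideanSpace.single k 1)) x * s k x i ∂ν) atTop
      (𝓝 (-∑ k, ∫ x, φ x * fderiv ℝ G (F x) (EuclideanSpace.single k 1) * s k x i ∂ν)) :=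
    (tendsto_finsetSum _ fun k _ => tendsto_integral_mollify_mul_fderiv_mollify hf hφ hG hF
      (hsi k) _).neg
  obtain ⟨δ, hδ, hδΩ⟩ := hφ.2.1.exists_cthickening_subset_open hΩ hφ.2.2
  have hibp := (tendsto_integral_comp_mollify_mul_fderiv hf hφ hG
    (EuclideanSpace.single i 1)).congr' (by
      filter_upwards [(tendsto_shrinkingBump_rOut (E := En n)).eventually (ge_mem_nhds hδ)]
        with j hj
      exact integral_comp_mollify_mul_fderiv hf hs _ hφ ((cthickening_mono hj _).trans hδΩ) hG.1 i)
  rw [tendsto_nhds_unique hibp hlim, ← integral_finsetSum]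
  · simp [chainDensity, Finset.mul_sum, mul_assoc]
  intro k _
  obtain ⟨A, hA⟩ := hφ.exists_norm_le
  obtain ⟨B, hB⟩ := (hG.fderiv_apply (EuclideanSpace.single k 1)).exists_norm_le
  have hFm := aemeasurable_of_ae_approxLimAt hf.locallyIntegrable hF
  refine (hsi k).bdd_mul (c := A * B) (hφ.1.continuous.aestronglyMeasurable.mul
    ((hG.fderiv_apply _).1.continuous.measurable.comp_aemeasurable hFm).aestronglyMeasurable)
    (.of_forall fun x => ?_)
  rw [norm_mul]
  exact mul_le_mul (hA x) (hB _) (norm_nonneg _) ((norm_nonneg _).trans (hA x))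

theorem HasDistribGradient.comp (hΩ : IsOpen Ω) (hf : LocallyIntegrableOn f Ω)
    (hs : ∀ k, HasDistribGradient Ω (fun x => f x k) (s k) ν)
    (hsν : ∀ k, LocallyIntegrableOn (s k) Ω ν)
    (hF : ∀ᵐ x ∂ν, ApproxLimAt f x (F x)) (hG : SmoothTest univ G) :
    HasDistribGradient Ω (fun x => G (f x)) (chainDensity G F s) ν := fun φ hφ i => by
  obtain ⟨D, hD, hφD, hDΩ⟩ := exists_compact_between hφ.2.1 hΩ hφ.2.2
  have hφ' : SmoothTest (interior D) φ := ⟨hφ.1, hφ.2.1, hφD⟩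
  have heq : EqOn (D.indicator f) f (interior D) := fun x hx =>
    indicator_of_mem (interior_subset hx) f
  rw [← hφ'.setIntegral_mul, ← hφ'.integral_mul_fderiv_congr (u := fun x => G (D.indicator f x))
    fun x hx => by simp only [heq hx]]
  refine HasDistribGradient.comp_of_integrable isOpen_interior
    ((hf.integrableOn_compact_subset hDΩ hD).integrable_indicator hD.measurableSet)
    (fun k => (hs k).congr_restrict (interior_subset.trans hDΩ) fun x hx => by simp only [heq hx])
    (fun k => ((hsν k).integrableOn_compact_subset hDΩ hD).mono_set interior_subset) ?_ hG φ hφ' i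
  filter_upwards [ae_restrict_mem isOpen_interior.measurableSet, ae_restrict_of_ae hF] with x hx hFx
  exact hFx.congr (heq.symm.eventuallyEq_of_mem (isOpen_interior.mem_nhds hx))

end ChainRule

section PolarDecomposition

variable {n m : ℕ} {Ω : Set (En n)} {f : En n → En m} {u : En n → ℝ}
  {σ : En n → Fin m → Fin n → ℝ} {ν : Measure (En n)}

/-- The `k`-th row of the matrix field `σ`, as a vector field. -/
def rowField (σ : En n → Fin m → Fin n → ℝ) (k : Fin m) (x : En n) : En n := WithLp.toLp 2 (σ x k)

theorem IsVariationMeasure.hasDistribGradient (h : IsVariationMeasure Ω f σ ν) (k : Fin m) :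
    HasDistribGradient Ω (fun x => f x k) (rowField σ k) ν := fun φ hφ i => by
  rw [← hφ.setIntegral_mul_fderiv, h.2.2.2 φ hφ k i]
  rfl

theorem IsVariationMeasureS.hasDistribGradient {τ : En n → Fin n → ℝ}
    (h : IsVariationMeasureS Ω u τ ν) :
    HasDistribGradient Ω u (fun x => WithLp.toLp 2 (τ x)) ν := fun φ hφ i => by
  rw [← hφ.setIntegral_mul_fderiv, h.2.2.2 φ hφ i]

theorem frobNorm_eq_sqrt_sum_norm_rowField (σ : En n → Fin m → Fin n → ℝ) (x : En n) :
    frobNorm (σ x) = √(∑ k, ‖rowField σ k x‖ ^ 2) := by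
  simp only [EuclideanSpace.norm_sq_eq, rowField, frobNorm, Real.norm_eq_abs, sq_abs]

theorem IsVariationMeasure.ae_norm_rowField_le_one (h : IsVariationMeasure Ω f σ ν) (k : Fin m) :
    ∀ᵐ x ∂ν, ‖rowField σ k x‖ ≤ 1 := by
  filter_upwards [h.2.1] with x hx
  rw [← hx, frobNorm_eq_sqrt_sum_norm_rowField]
  exact Real.le_sqrt_of_sq_le (Finset.single_le_sum (f := fun k => ‖rowField σ k x‖ ^ 2)
    (fun _ _ => sq_nonneg _) (Finset.mem_univ k))

theorem IsVariationMeasure.ae_one_le_sum_norm_rowField (h : IsVariationMeasure Ω f σ ν) :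
    ∀ᵐ x ∂ν, 1 ≤ ∑ k, ‖rowField σ k x‖ := by
  filter_upwards [h.2.1] with x hx
  rw [← hx, frobNorm_eq_sqrt_sum_norm_rowField]
  exact Real.sqrt_le_iff.2 ⟨Finset.sum_nonneg fun _ _ => norm_nonneg _,
    Finset.sum_sq_le_sq_sum_of_nonneg fun _ _ => norm_nonneg _⟩

theorem measurable_rowField (hσ : Measurable σ) (k : Fin m) : Measurable (rowField σ k) :=
  (WithLp.measurable_toLp 2 _).comp ((measurable_pi_apply k).comp hσ)

theorem IsVariationMeasure.locallyIntegrableOn_rowField (h : IsVariationMeasure Ω f σ ν)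
    (hΩ : IsOpen Ω) (hν : ∀ C, IsCompact C → C ⊆ Ω → ν C < ⊤) (k : Fin m) :
    LocallyIntegrableOn (rowField σ k) Ω ν := by
  refine (locallyIntegrableOn_iff hΩ.isLocallyClosed).2 fun C hCΩ hC => ?_
  exact Measure.integrableOn_of_bounded (hν C hC hCΩ).ne
    (measurable_rowField h.1 k).aestronglyMeasurable
    (ae_restrict_of_ae (h.ae_norm_rowField_le_one k))

end PolarDecomposition

section Boxes

variable {n : ℕ}

/-- The open axis-parallel box `∏ᵢ (aᵢ, bᵢ)`. -/
def openBox (a b : Fin n → ℝ) : Set (En n) := {x | ∀ i, x i ∈ Ioo (a i) (b i)}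

/-- The closed axis-parallel box `∏ᵢ [aᵢ, bᵢ]`. -/
def closedBox (a b : Fin n → ℝ) : Set (En n) := {x | ∀ i, x i ∈ Icc (a i) (b i)}

theorem openBox_subset_closedBox (a b : Fin n → ℝ) : openBox a b ⊆ closedBox a b :=
  fun _ hx i => Ioo_subset_Icc_self (hx i)

theorem openBox_eq_preimage_pi (a b : Fin n → ℝ) :
    openBox a b = WithLp.ofLp ⁻¹' univ.pi fun i => Ioo (a i) (b i) := by
  ext x
  simp [openBox]

theorem measurableSet_openBox (a b : Fin n → ℝ) : MeasurableSet (openBox a b) := by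
  rw [openBox_eq_preimage_pi]
  exact (WithLp.measurable_ofLp 2 _) (MeasurableSet.univ_pi fun _ => measurableSet_Ioo)

theorem isCompact_closedBox (a b : Fin n → ℝ) : IsCompact (closedBox a b) := by
  have : closedBox a b = WithLp.toLp 2 '' Icc a b := by
    ext x
    refine ⟨fun hx => ⟨x.ofLp, ⟨fun i => (hx i).1, fun i => (hx i).2⟩, rfl⟩, ?_⟩
    rintro ⟨y, hy, rfl⟩ i
    exact ⟨hy.1 i, hy.2 i⟩
  rw [this]
  exact isCompact_Icc.image (PiLp.continuous_toLp 2 _)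

theorem volume_openBox (a b : Fin n → ℝ) :
    volume (openBox a b) = ∏ i, ENNReal.ofReal (b i - a i) := by
  rw [openBox_eq_preimage_pi, (PiLp.volume_preserving_ofLp (Fin n)).measure_preimage
    (MeasurableSet.univ_pi fun _ => measurableSet_Ioo).nullMeasurableSet, Real.volume_pi_Ioo]

theorem volume_openBox_lt_top (a b : Fin n → ℝ) : volume (openBox a b) < ∞ := by
  rw [volume_openBox]
  exact ENNReal.prod_lt_top fun i _ => ENNReal.ofReal_lt_top

theorem setIntegral_openBox (a b : Fin n → ℝ) (g : En n → ℝ) :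
    ∫ x in openBox a b, g x = ∫ y in Icc a b, g (WithLp.toLp 2 y) := by
  rw [openBox_eq_preimage_pi]
  exact ((PiLp.volume_preserving_ofLp (Fin n)).setIntegral_preimage_emb
    (MeasurableEquiv.toLp 2 (Fin n → ℝ)).symm.measurableEmbedding
    (fun y => g (WithLp.toLp 2 y)) _).trans
    (setIntegral_congr_set Measure.univ_pi_Ioo_ae_eq_Icc)

theorem measurableEmbedding_toLp :
    MeasurableEmbedding (WithLp.toLp 2 : (Fin n → ℝ) → En n) :=
  (MeasurableEquiv.toLp 2 (Fin n → ℝ)).measurableEmbedding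

/-- The marginals of the surface measure on the face `{xᵢ = c}` of the box `∏ₖ (aₖ, bₖ)`. -/
def faceMarginal (a b : Fin n → ℝ) (i : Fin n) (c : ℝ) (k : Fin n) : Measure ℝ :=
  if k = i then Measure.dirac c else volume.restrict (Ioo (a k) (b k))

instance (a b : Fin n → ℝ) (i : Fin n) (c : ℝ) (k : Fin n) :
    IsFiniteMeasure (faceMarginal a b i c k) := by
  unfold faceMarginal
  split_ifs <;> infer_instance

/-- The surface measure on the face `{xᵢ = c}` of the box `∏ₖ (aₖ, bₖ)`, as a product measure:
a Dirac mass in the `i`-th coordinate and Lebesgue measure in the others. -/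
def faceMeasure (a b : Fin n → ℝ) (i : Fin n) (c : ℝ) : Measure (En n) :=
  (Measure.pi (faceMarginal a b i c)).map (WithLp.toLp 2)

instance (a b : Fin n → ℝ) (i : Fin n) (c : ℝ) : IsFiniteMeasure (faceMeasure a b i c) := by
  unfold faceMeasure
  infer_instance

theorem faceMeasure_univ (a b : Fin n → ℝ) (i : Fin n) (c : ℝ) :
    faceMeasure a b i c univ = ∏ k ∈ Finset.univ.erase i, ENNReal.ofReal (b k - a k) := by
  rw [faceMeasure, Measure.map_apply (WithLp.measurable_toLp 2 _) .univ, preimage_univ,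
    Measure.pi_univ, ← Finset.mul_prod_erase Finset.univ _ (Finset.mem_univ i)]
  have hi : faceMarginal a b i c i univ = 1 := by simp [faceMarginal]
  rw [hi, one_mul]
  refine Finset.prod_congr rfl fun k hk => ?_
  simp [faceMarginal, Finset.ne_of_mem_erase hk]

theorem ae_faceMeasure (a b : Fin n → ℝ) (i : Fin n) (c : ℝ) :
    ∀ᵐ x ∂faceMeasure a b i c, x i = c ∧ ∀ k, k ≠ i → x k ∈ Ioo (a k) (b k) := by
  have hmarginal : ∀ k, ∀ᵐ s ∂faceMarginal a b i c k,
      (k = i → s = c) ∧ (k ≠ i → s ∈ Ioo (a k) (b k)) := by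
    intro k
    by_cases hk : k = i
    · simp [hk, faceMarginal]
    · simpa [hk, faceMarginal] using ae_restrict_mem (measurableSet_Ioo (a := a k) (b := b k))
  rw [faceMeasure, measurableEmbedding_toLp.ae_map_iff]
  have hcoord := ae_all_iff.2 fun k =>
    (Measure.tendsto_eval_ae_ae (i := k)).eventually (hmarginal k)
  filter_upwards [hcoord] with x hx
  exact ⟨(hx i).1 rfl, fun k hk => (hx k).2 hk⟩

theorem integral_faceMeasure (a b : Fin (n + 1) → ℝ) (i : Fin (n + 1)) (c : ℝ)
    (φ : En (n + 1) → ℝ) :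
    ∫ x, φ x ∂faceMeasure a b i c =
      ∫ y in Icc (a ∘ i.succAbove) (b ∘ i.succAbove), φ (WithLp.toLp 2 (i.insertNth c y)) := by
  have hdirac : faceMarginal a b i c i = Measure.dirac c := by simp [faceMarginal]
  have hlebesgue : (fun k => faceMarginal a b i c (i.succAbove k)) = fun k =>
      volume.restrict (Ioo (a (i.succAbove k)) (b (i.succAbove k))) := by
    funext k
    simp [faceMarginal, Fin.succAbove_ne]
  rw [faceMeasure, measurableEmbedding_toLp.integral_map,
    ← (measurePreserving_piFinSuccAbove (faceMarginal a b i c) i).symm.integral_comp', hdirac,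
    hlebesgue, Measure.dirac_prod, (measurableEmbedding_prodMk_left c).integral_map,
    ← Measure.restrict_pi_pi]
  exact setIntegral_congr_set Measure.univ_pi_Ioo_ae_eq_Icc

theorem setIntegral_openBox_fderiv {a b : Fin n → ℝ} (hab : a ≤ b) (i : Fin n) {φ : En n → ℝ}
    (hφ : ContDiff ℝ 1 φ) :
    ∫ x in openBox a b, fderiv ℝ φ x (EuclideanSpace.single i 1) =
      ∫ x, φ x ∂faceMeasure a b i (b i) - ∫ x, φ x ∂faceMeasure a b i (a i) := by
  obtain _ | n := n
  · exact i.elim0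
  let e := (EuclideanSpace.equiv (Fin (n + 1)) ℝ).symm.toContinuousLinearMap
  let D := fun (k : Fin (n + 1)) x => if k = i then (fderiv ℝ φ (e x)).comp e else 0
  have hD : ∀ x, ∑ k, D k x (Pi.single k 1) = fderiv ℝ φ (e x) (EuclideanSpace.single i 1) := by
    intro x
    rw [Finset.sum_eq_single_of_mem i (Finset.mem_univ i) fun k _ hk => by simp [D, hk]]
    simp only [D, if_true]
    rfl
  have hφcont := hφ.continuous
  have hcont : Continuous fun x => fderiv ℝ φ (e x) (EuclideanSpace.single i 1) :=
    ((hφ.continuous_fderiv one_ne_zero).comp e.continuous).clm_apply continuous_const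
  have hdiv := integral_divergence_of_hasFDerivAt_off_countable' a b hab
    (fun k x => if k = i then φ (e x) else 0) D ∅ countable_empty
    (fun k => by split_ifs <;> fun_prop) (fun x _ k => ?_)
    (by simpa only [hD] using hcont.continuousOn.integrableOn_compact isCompact_Icc)
  · rw [setIntegral_openBox, integral_faceMeasure, integral_faceMeasure]
    simp only [hD] at hdiv
    rw [Finset.sum_eq_single_of_mem i (Finset.mem_univ i) fun k _ hk => by simp [hk]] at hdiv
    simp only [if_true] at hdiv
    exact hdiv
  · simp only [D]
    split_ifs
    · exact ((hφ.differentiable one_ne_zero) (e x)).hasFDerivAt.comp x e.hasFDerivAt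
    · exact hasFDerivAt_const _ _

/-- The inner unit normal of the box `∏ᵢ (aᵢ, bᵢ)` on the relative interiors of its faces. -/
def boxNormal (a b : Fin n → ℝ) (x : En n) (i : Fin n) : ℝ :=
  if x i = a i then 1 else if x i = b i then -1 else 0

theorem measurable_boxNormal (a b : Fin n → ℝ) : Measurable (boxNormal a b) :=
  measurable_pi_lambda _ fun _ =>
    .ite (measurableSet_eq_fun (by fun_prop) measurable_const) measurable_const
      (.ite (measurableSet_eq_fun (by fun_prop) measurable_const) measurable_const
        measurable_const)

theorem norm_boxNormal_le_one (a b : Fin n → ℝ) (x : En n) (i : Fin n) :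
    ‖boxNormal a b x i‖ ≤ 1 := by
  unfold boxNormal
  split_ifs <;> simp

theorem ae_boxNormal_lower {a b : Fin n → ℝ} (hab : ∀ i, a i < b i) (i : Fin n) :
    ∀ᵐ x ∂faceMeasure a b i (a i), x ∈ closedBox a b ∧ boxNormal a b x = Pi.single i 1 := by
  filter_upwards [ae_faceMeasure a b i (a i)] with x ⟨hi, hx⟩
  refine ⟨fun k => ?_, funext fun k => ?_⟩ <;> obtain rfl | hk := eq_or_ne k i
  · exact ⟨hi.ge, hi.trans_le (hab k).le⟩
  · exact Ioo_subset_Icc_self (hx k hk)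
  · simp [boxNormal, hi]
  · simp [boxNormal, hk, (hx k hk).1.ne', (hx k hk).2.ne]

theorem ae_boxNormal_upper {a b : Fin n → ℝ} (hab : ∀ i, a i < b i) (i : Fin n) :
    ∀ᵐ x ∂faceMeasure a b i (b i), x ∈ closedBox a b ∧ boxNormal a b x = Pi.single i (-1) := by
  filter_upwards [ae_faceMeasure a b i (b i)] with x ⟨hi, hx⟩
  refine ⟨fun k => ?_, funext fun k => ?_⟩ <;> obtain rfl | hk := eq_or_ne k i
  · exact ⟨(hab k).le.trans hi.ge, hi.le⟩
  · exact Ioo_subset_Icc_self (hx k hk)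
  · simp [boxNormal, hi, (hab k).ne']
  · simp [boxNormal, hk, (hx k hk).1.ne', (hx k hk).2.ne]

/-- The perimeter measure of the box `∏ᵢ (aᵢ, bᵢ)`. -/
def boxPerimeter (a b : Fin n → ℝ) : Measure (En n) :=
  ∑ i, (faceMeasure a b i (a i) + faceMeasure a b i (b i))

instance (a b : Fin n → ℝ) : IsFiniteMeasure (boxPerimeter a b) := by
  unfold boxPerimeter
  infer_instance

theorem ae_boxPerimeter_iff {a b : Fin n → ℝ} {p : En n → Prop} :
    (∀ᵐ x ∂boxPerimeter a b, p x) ↔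
      ∀ i, (∀ᵐ x ∂faceMeasure a b i (a i), p x) ∧ ∀ᵐ x ∂faceMeasure a b i (b i), p x := by
  simp [boxPerimeter, ae_iff, Measure.finsetSum_apply]

theorem boxPerimeter_univ {a b : Fin n → ℝ} (hab : a ≤ b) :
    boxPerimeter a b univ =
      ENNReal.ofReal (2 * ∑ i, ∏ k ∈ Finset.univ.erase i, (b k - a k)) := by
  have hside : ∀ k, 0 ≤ b k - a k := fun k => sub_nonneg.2 (hab k)
  simp only [boxPerimeter, Measure.finsetSum_apply, Measure.add_apply, faceMeasure_univ]
  rw [Finset.mul_sum, ENNReal.ofReal_sum_of_nonneg fun i _ =>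
    mul_nonneg zero_le_two (Finset.prod_nonneg fun k _ => hside k)]
  refine Finset.sum_congr rfl fun i _ => ?_
  rw [ENNReal.ofReal_mul zero_le_two, ENNReal.ofReal_prod_of_nonneg fun k _ => hside k, ← two_mul,
    ENNReal.ofReal_ofNat]

theorem ae_boxPerimeter_mem_closedBox {a b : Fin n → ℝ} (hab : ∀ i, a i < b i) :
    ∀ᵐ x ∂boxPerimeter a b, x ∈ closedBox a b :=
  ae_boxPerimeter_iff.2 fun i =>
    ⟨(ae_boxNormal_lower hab i).mono fun _ h => h.1, (ae_boxNormal_upper hab i).mono fun _ h => h.1⟩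

theorem ae_sum_sq_boxNormal {a b : Fin n → ℝ} (hab : ∀ i, a i < b i) :
    ∀ᵐ x ∂boxPerimeter a b, ∑ i, boxNormal a b x i ^ 2 = 1 := by
  refine ae_boxPerimeter_iff.2 fun i => ⟨?_, ?_⟩
  · filter_upwards [ae_boxNormal_lower hab i] with x hx
    simp [hx.2, Pi.single_apply]
  · filter_upwards [ae_boxNormal_upper hab i] with x hx
    simp [hx.2, Pi.single_apply]

theorem integral_boxPerimeter_mul_boxNormal {a b : Fin n → ℝ} (hab : ∀ i, a i < b i)
    {φ : En n → ℝ} (hφ : Integrable φ (boxPerimeter a b)) (i : Fin n) :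
    ∫ x, φ x * boxNormal a b x i ∂boxPerimeter a b =
      ∫ x, φ x ∂faceMeasure a b i (a i) - ∫ x, φ x ∂faceMeasure a b i (b i) := by
  have hint : Integrable (fun x => φ x * boxNormal a b x i) (boxPerimeter a b) :=
    hφ.mul_bdd (c := 1) ((measurable_pi_apply i).comp
      (measurable_boxNormal a b)).aestronglyMeasurable
      (Eventually.of_forall fun x => norm_boxNormal_le_one a b x i)
  have hfaces := fun k =>
    integrable_add_measure.1 (integrable_finsetSum_measure.1 hint k (Finset.mem_univ k))
  have hlower : ∀ k, ∫ x, φ x * boxNormal a b x i ∂faceMeasure a b k (a k) =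
      if i = k then ∫ x, φ x ∂faceMeasure a b k (a k) else 0 := by
    intro k
    rw [integral_congr_ae (g := fun x => φ x * Pi.single (M := fun _ => ℝ) k 1 i)
      ((ae_boxNormal_lower hab k).mono fun x hx => by simp only [hx.2])]
    obtain rfl | hk := eq_or_ne i k <;> simp [*]
  have hupper : ∀ k, ∫ x, φ x * boxNormal a b x i ∂faceMeasure a b k (b k) =
      if i = k then -∫ x, φ x ∂faceMeasure a b k (b k) else 0 := by
    intro k
    rw [integral_congr_ae (g := fun x => φ x * Pi.single (M := fun _ => ℝ) k (-1) i)
      ((ae_boxNormal_upper hab k).mono fun x hx => by simp only [hx.2])]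
    obtain rfl | hk := eq_or_ne i k <;> simp [*, integral_neg]
  rw [boxPerimeter, integral_finsetSum_measure fun k _ => integrable_add_measure.2 (hfaces k)]
  simp_rw [integral_add_measure (hfaces _).1 (hfaces _).2, hlower, hupper]
  simp [Finset.sum_add_distrib, sub_eq_add_neg]

theorem memBVs_indicator_openBox {a b : Fin n → ℝ} (hab : ∀ i, a i < b i) {Ω : Set (En n)}
    (hΩ : closedBox a b ⊆ Ω) :
    MemBVs Ω ((openBox a b).indicator fun _ => (1 : ℝ)) (boxPerimeter a b) := by
  have hmeas := measurableSet_openBox a b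
  refine ⟨((integrable_indicator_iff hmeas).2
      (integrableOn_const (volume_openBox_lt_top a b).ne)).integrableOn, measure_lt_top _ _,
    boxNormal a b, measurable_boxNormal a b, ?_, ?_, fun φ hφ i => ?_⟩
  · filter_upwards [ae_sum_sq_boxNormal hab] with x hx
    rw [hx, Real.sqrt_one]
  · exact (ae_boxPerimeter_mem_closedBox hab).mono fun x hx => hΩ hx
  · calc ∫ x in Ω, (openBox a b).indicator (fun _ => (1 : ℝ)) x *
          fderiv ℝ φ x (EuclideanSpace.single i 1)
        = ∫ x in openBox a b, fderiv ℝ φ x (EuclideanSpace.single i 1) := by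
          rw [hφ.setIntegral_mul_fderiv, ← integral_indicator hmeas]
          exact integral_congr_ae (.of_forall fun x => by
            by_cases hx : x ∈ openBox a b <;> simp [hx])
      _ = -∫ x, φ x * boxNormal a b x i ∂boxPerimeter a b := by
          rw [setIntegral_openBox_fderiv (fun k => (hab k).le) i (hφ.1.of_le (mod_cast le_top)),
            integral_boxPerimeter_mul_boxNormal hab hφ.integrable, neg_sub]

end Boxes

section Divergence

open scoped RealInnerProductSpace

variable {n : ℕ} {Ω : Set (En n)} {Φ s : En n → En n} {u : En n → ℝ} {ν : Measure (En n)}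

/-- The divergence of a vector field. -/
def divergence (Φ : En n → En n) (x : En n) : ℝ :=
  ∑ i, fderiv ℝ (fun y => Φ y i) x (EuclideanSpace.single i 1)

theorem SmoothTestField.apply (hΦ : SmoothTestField Ω Φ) (i : Fin n) :
    SmoothTest Ω fun x => Φ x i := by
  have hsupp : tsupport (fun x => Φ x i) ⊆ tsupport Φ :=
    closure_mono fun x hx hΦx => hx (by simp [hΦx])
  exact ⟨(EuclideanSpace.proj i : En n →L[ℝ] ℝ).contDiff.comp hΦ.1,
    hΦ.2.1.of_isClosed_subset (isClosed_tsupport _) hsupp, hsupp.trans hΦ.2.2⟩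

theorem SmoothTestField.smoothTest_divergence (hΦ : SmoothTestField Ω Φ) :
    SmoothTest Ω (divergence Φ) := by
  have hΦ' : SmoothTestField (tsupport Φ) Φ := ⟨hΦ.1, hΦ.2.1, subset_rfl⟩
  have hsupp : Function.support (divergence Φ) ⊆ tsupport Φ := fun x hx => by
    by_contra hxΦ
    exact hx (Finset.sum_eq_zero fun i _ => ((hΦ'.apply i).fderiv_apply _).eq_zero hxΦ)
  exact ⟨ContDiff.sum fun i _ => ((hΦ.apply i).fderiv_apply _).1,
    .of_support_subset_isCompact hΦ.2.1 hsupp,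
    (closure_minimal hsupp (isClosed_tsupport _)).trans hΦ.2.2⟩

theorem SmoothTest.integrable_mul {φ h : En n → ℝ} (hφ : SmoothTest Ω φ)
    (hh : LocallyIntegrableOn h Ω ν) : Integrable (fun x => φ x * h x) ν := by
  obtain ⟨C, hC⟩ := hφ.exists_norm_le
  refine (integrableOn_iff_integrable_of_support_subset fun x hx =>
    subset_tsupport φ (left_ne_zero_of_mul hx)).1 ?_
  exact (hh.integrableOn_compact_subset hφ.2.2 hφ.2.1).bdd_mul
    hφ.1.continuous.aestronglyMeasurable (.of_forall hC)

theorem HasDistribGradient.integral_mul_divergence (h : HasDistribGradient Ω u s ν)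
    (hu : LocallyIntegrableOn u Ω) (hs : LocallyIntegrableOn s Ω ν) (hΦ : SmoothTestField Ω Φ) :
    ∫ x, u x * divergence Φ x = -∫ x, ⟪Φ x, s x⟫ ∂ν := by
  have hsi : ∀ i, LocallyIntegrableOn (fun x => s x i) Ω ν := fun i x hx =>
    let ⟨t, ht, hst⟩ := hs x hx
    ⟨t, ht, (EuclideanSpace.proj i : En n →L[ℝ] ℝ).integrable_comp hst⟩
  have hinner : ∀ x, ⟪Φ x, s x⟫ = ∑ i, Φ x i * s x i := fun x => by
    simp [PiLp.inner_apply, mul_comm]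
  simp only [divergence, Finset.mul_sum, hinner]
  rw [integral_finsetSum _ fun i _ => (hΦ.apply i).integrable_mul (hsi i),
    integral_finsetSum _ fun i _ => by
      simpa only [mul_comm] using ((hΦ.apply i).fderiv_apply _).integrable_mul hu,
    ← Finset.sum_neg_distrib]
  exact Finset.sum_congr rfl fun i _ => h _ (hΦ.apply i) i

theorem MemBVs.abs_integral_mul_divergence_le (h : MemBVs Ω u ν) (hΦ : SmoothTestField Ω Φ)
    (hΦ1 : ∀ x, ‖Φ x‖ ≤ 1) : |∫ x, u x * divergence Φ x| ≤ (ν Ω).toReal := by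
  obtain ⟨hu, hνΩ, τ, hτ⟩ := h
  have hνuniv : ν univ = ν Ω := (measure_eq_measure_of_null_sdiff (subset_univ Ω)
    (by rw [← compl_eq_univ_sdiff]; exact hτ.2.2.1)).symm
  have : IsFiniteMeasure ν := ⟨hνuniv ▸ hνΩ⟩
  have hnorm : ∀ᵐ x ∂ν, ‖WithLp.toLp 2 (τ x)‖ = 1 := hτ.2.1.mono fun x hx => by
    simpa [EuclideanSpace.norm_eq] using hx
  have hint : Integrable (fun x => WithLp.toLp 2 (τ x)) ν := .of_bound
    ((WithLp.measurable_toLp 2 _).comp hτ.1).aestronglyMeasurable 1 (hnorm.mono fun x hx => hx.le)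
  rw [hτ.hasDistribGradient.integral_mul_divergence hu.locallyIntegrableOn
    (hint.locallyIntegrable.locallyIntegrableOn _) hΦ, abs_neg, ← hνuniv,
    ← Real.norm_eq_abs]
  refine (norm_integral_le_of_norm_le_const (C := 1) ?_).trans (one_mul _).le
  filter_upwards [hnorm] with x hx
  exact (norm_inner_le_norm _ _).trans (by rw [hx, mul_one]; exact hΦ1 x)

end Divergence

section AveragedPerimeterBound

open scoped RealInnerProductSpace

variable {n m : ℕ} {Ω₁ : Set (En n)} {Ω₂ : Set (En m)} {f : En n → En m} {K : ℝ≥0}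
  {L : Fin m → ℝ} {w : En m → ℝ} {Φ : En n → En n}

/-- Preimages under `f` of open boxes `Q` whose closure lies in `Ω₂` have finite perimeter in `Ω₁`,
at most `K` times the perimeter of `Q`. -/
def BoxPerimeterBound (Ω₁ : Set (En n)) (Ω₂ : Set (En m)) (f : En n → En m) (K : ℝ≥0) : Prop :=
  ∀ a b, (∀ i, a i < b i) → closedBox a b ⊆ Ω₂ → ∃ ν : Measure (En n),
    MemBVs Ω₁ ((f ⁻¹' openBox a b ∩ Ω₁).indicator fun _ => (1 : ℝ)) ν ∧
      ν Ω₁ ≤ K * boxPerimeter a b univ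

/-- The surface area `2 ∑ᵢ ∏_{k ≠ i} Lₖ` of a box with side lengths `L`. -/
def boxSurface (L : Fin m → ℝ) : ℝ := 2 * ∑ i, ∏ k ∈ Finset.univ.erase i, L k

/-- The average, with weight `w z`, of the indicators of the translated boxes `z + ∏ᵢ (0, Lᵢ)`. -/
def boxAverage (L : Fin m → ℝ) (w : En m → ℝ) (y : En m) : ℝ :=
  ∫ z, w z * (openBox z.ofLp (z.ofLp + L)).indicator (fun _ => 1) y

theorem boxSurface_nonneg (hL : ∀ i, 0 ≤ L i) : 0 ≤ boxSurface L :=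
  mul_nonneg zero_le_two (Finset.sum_nonneg fun _ _ => Finset.prod_nonneg fun k _ => hL k)

theorem mem_openBox_add {y z : En m} :
    y ∈ openBox z.ofLp (z.ofLp + L) ↔ y - z ∈ openBox 0 L := by
  simp [openBox, sub_lt_iff_lt_add']

theorem indicator_openBox_add (y z : En m) :
    (openBox z.ofLp (z.ofLp + L)).indicator (fun _ => (1 : ℝ)) y =
      (openBox 0 L).indicator (fun _ => 1) (y - z) := by
  classical simp only [indicator_apply, mem_openBox_add]

theorem BoxPerimeterBound.abs_integral_indicator_mul_divergence_le
    (hK : BoxPerimeterBound Ω₁ Ω₂ f K) {a b : Fin m → ℝ} (hab : ∀ i, a i < b i)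
    (hΩ : closedBox a b ⊆ Ω₂) (hΦ : SmoothTestField Ω₁ Φ) (hΦ1 : ∀ x, ‖Φ x‖ ≤ 1) :
    |∫ x in Ω₁, (openBox a b).indicator (fun _ => 1) (f x) * divergence Φ x| ≤
      K * boxSurface (b - a) := by
  obtain ⟨ν, hBV, hν⟩ := hK a b hab hΩ
  have hpreimage : ∀ x, (openBox a b).indicator (fun _ => (1 : ℝ)) (f x) * divergence Φ x =
      (f ⁻¹' openBox a b ∩ Ω₁).indicator (fun _ => 1) x * divergence Φ x := fun x => by
    by_cases hx : x ∈ Ω₁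
    · by_cases hfx : f x ∈ openBox a b <;> simp [hx, hfx]
    · simp only [hΦ.smoothTest_divergence.eq_zero hx, mul_zero]
  have hsurface : ν Ω₁ ≤ ENNReal.ofReal (K * boxSurface (b - a)) := by
    rw [ENNReal.ofReal_mul K.coe_nonneg, ENNReal.ofReal_coe_nnreal]
    rwa [boxPerimeter_univ fun i => (hab i).le] at hν
  simp only [hpreimage]
  rw [setIntegral_eq_integral_of_forall_compl_eq_zero fun x hx => by
    rw [hΦ.smoothTest_divergence.eq_zero hx, mul_zero]]
  refine (hBV.abs_integral_mul_divergence_le hΦ hΦ1).trans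
    (ENNReal.toReal_le_of_le_ofReal ?_ hsurface)
  exact mul_nonneg K.coe_nonneg (boxSurface_nonneg fun i => sub_nonneg.2 (hab i).le)

theorem integral_boxAverage_comp_mul {μ : Measure (En n)} [SFinite μ] (hf : AEMeasurable f μ)
    {D : En n → ℝ} (hD : Integrable D μ) (hw : Integrable w) :
    ∫ x, boxAverage L w (f x) * D x ∂μ =
      ∫ z, w z * ∫ x, (openBox z.ofLp (z.ofLp + L)).indicator (fun _ => 1) (f x) * D x ∂μ := by
  have hfst : AEMeasurable (fun p : En n × En m => f p.1) (μ.prod volume) :=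
    hf.comp_quasiMeasurePreserving Measure.quasiMeasurePreserving_fst
  have hind : AEStronglyMeasurable (fun p : En n × En m =>
      (openBox 0 L).indicator (fun _ => (1 : ℝ)) (f p.1 - p.2)) (μ.prod volume) :=
    ((measurable_const.indicator (measurableSet_openBox 0 L)).comp_aemeasurable
      (hfst.sub measurable_snd.aemeasurable)).aestronglyMeasurable
  have hprod : Integrable (Function.uncurry fun x z =>
      w z * ((openBox 0 L).indicator (fun _ => (1 : ℝ)) (f x - z) * D x)) (μ.prod volume) := by
    refine ((hD.mul_prod hw).bdd_mul (c := 1) hind (.of_forall fun p => ?_)).congr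
      (.of_forall fun p => ?_)
    · exact (norm_indicator_le_norm_self _ _).trans (by simp)
    · simp only [Function.uncurry]
      ring
  simp only [boxAverage, indicator_openBox_add, ← integral_mul_const, ← integral_const_mul,
    mul_assoc]
  exact integral_integral_swap hprod

theorem BoxPerimeterBound.abs_integral_boxAverage_mul_divergence_le
    (hK : BoxPerimeterBound Ω₁ Ω₂ f K) (hf : AEMeasurable f (volume.restrict Ω₁))
    (hL : ∀ i, 0 < L i) (hw : Integrable w)
    (hwΩ : ∀ z, w z ≠ 0 → closedBox z.ofLp (z.ofLp + L) ⊆ Ω₂)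
    (hΦ : SmoothTestField Ω₁ Φ) (hΦ1 : ∀ x, ‖Φ x‖ ≤ 1) :
    |∫ x, boxAverage L w (f x) * divergence Φ x| ≤ K * boxSurface L * ∫ z, |w z| := by
  rw [← setIntegral_eq_integral_of_forall_compl_eq_zero (s := Ω₁) fun x hx => by
      rw [hΦ.smoothTest_divergence.eq_zero hx, mul_zero],
    integral_boxAverage_comp_mul hf hΦ.smoothTest_divergence.integrable hw, mul_comm,
    ← integral_mul_const, ← Real.norm_eq_abs]
  refine norm_integral_le_of_norm_le (hw.abs.mul_const _) (.of_forall fun z => ?_)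
  by_cases hz : w z = 0
  · simp [hz]
  rw [norm_mul, Real.norm_eq_abs, Real.norm_eq_abs]
  gcongr
  simpa using hK.abs_integral_indicator_mul_divergence_le (b := z.ofLp + L)
    (fun i => lt_add_of_pos_right _ (hL i)) (hwΩ z hz) hΦ hΦ1

variable {F : En n → En m} {s : Fin m → En n → En n} {ν : Measure (En n)}

theorem locallyIntegrableOn_chainDensity {G : En m → ℝ} (hG : SmoothTest univ G)
    (hΩ₁ : IsOpen Ω₁) (hF : AEMeasurable F ν) (hs : ∀ k, LocallyIntegrableOn (s k) Ω₁ ν) :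
    LocallyIntegrableOn (chainDensity G F s) Ω₁ ν := by
  refine (locallyIntegrableOn_iff hΩ₁.isLocallyClosed).2 fun C hCΩ hC => ?_
  refine integrable_finsetSum _ fun k _ => ?_
  have hG' := hG.fderiv_apply (EuclideanSpace.single k 1)
  obtain ⟨B, hB⟩ := hG'.exists_norm_le
  exact ((hs k).integrableOn_compact_subset hCΩ hC).bdd_smul B
    (hG'.1.continuous.measurable.comp_aemeasurable hF).aestronglyMeasurable.restrict
    (.of_forall fun x => hB (F x))

theorem BoxPerimeterBound.lintegral_enorm_chainDensity_le (hΩ₁ : IsOpen Ω₁)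
    (hK : BoxPerimeterBound Ω₁ Ω₂ f K) (hf : LocallyIntegrableOn f Ω₁)
    (hs : ∀ k, HasDistribGradient Ω₁ (fun x => f x k) (s k) ν)
    (hsν : ∀ k, LocallyIntegrableOn (s k) Ω₁ ν) (hν : ν Ω₁ᶜ = 0)
    (hFm : AEMeasurable F ν) (hF : ∀ᵐ x ∂ν, ApproxLimAt f x (F x)) (hL : ∀ i, 0 < L i)
    (hw : Integrable w) (hwΩ : ∀ z, w z ≠ 0 → closedBox z.ofLp (z.ofLp + L) ⊆ Ω₂)
    (hG : SmoothTest univ (boxAverage L w)) :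
    ∫⁻ x, ‖chainDensity (boxAverage L w) F s x‖ₑ ∂ν ≤
      ENNReal.ofReal (K * boxSurface L * ∫ z, |w z|) := by
  have hfm := hf.aestronglyMeasurable.aemeasurable
  have hH := locallyIntegrableOn_chainDensity hG hΩ₁ hFm hsν
  have hu : LocallyIntegrableOn (fun x => boxAverage L w (f x)) Ω₁ := by
    obtain ⟨B, hB⟩ := hG.exists_norm_le
    refine (locallyIntegrableOn_iff hΩ₁.isLocallyClosed).2 fun C hCΩ hC => ?_
    exact .of_bound hC.measure_lt_top (hG.1.continuous.measurable.comp_aemeasurable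
      (hfm.mono_set hCΩ)).aestronglyMeasurable B (.of_forall fun x => hB (f x))
  refine lintegral_enorm_le_of_forall_smoothTestField hΩ₁ hν hH fun Φ hΦ hΦ1 => ?_
  rw [← neg_eq_iff_eq_neg.2
    ((HasDistribGradient.comp hΩ₁ hf hs hsν hF hG).integral_mul_divergence hu hH hΦ)]
  exact (neg_le_abs _).trans
    (hK.abs_integral_boxAverage_mul_divergence_le hfm hL hw hwΩ hΦ hΦ1)

end AveragedPerimeterBound

section BoxAverages

open scoped Convolution

variable {m : ℕ} {Ω : Set (En m)} {L : Fin m → ℝ} {w : En m → ℝ}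

theorem boxAverage_eq_convolution (L : Fin m → ℝ) (w : En m → ℝ) :
    boxAverage L w =
      (openBox 0 L).indicator (fun _ => (1 : ℝ)) ⋆[ContinuousLinearMap.lsmul ℝ ℝ] w := by
  funext y
  simp only [boxAverage, convolution_eq_swap, indicator_openBox_add,
    ContinuousLinearMap.lsmul_apply, smul_eq_mul, mul_comm]

theorem locallyIntegrable_indicator_openBox (a b : Fin m → ℝ) :
    LocallyIntegrable ((openBox a b).indicator fun _ => (1 : ℝ)) :=
  ((integrable_indicator_iff (measurableSet_openBox a b)).2
    (integrableOn_const (volume_openBox_lt_top a b).ne)).locallyIntegrable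

theorem SmoothTest.smoothTest_boxAverage (hw : SmoothTest Ω w) (L : Fin m → ℝ) :
    SmoothTest univ (boxAverage L w) := by
  rw [boxAverage_eq_convolution]
  refine ⟨hw.2.1.contDiff_convolution_right _ (locallyIntegrable_indicator_openBox 0 L) hw.1,
    .convolution _ (.of_support_subset_isCompact (isCompact_closedBox 0 L) ?_) hw.2.1,
    subset_univ _⟩
  exact support_indicator_subset.trans (openBox_subset_closedBox 0 L)

theorem SmoothTest.fderiv_boxAverage (hw : SmoothTest Ω w) (L : Fin m → ℝ) (y v : En m) :
    fderiv ℝ (boxAverage L w) y v = ∫ t in openBox 0 L, fderiv ℝ w (y - t) v := by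
  have hind := locallyIntegrable_indicator_openBox 0 L
  rw [boxAverage_eq_convolution, (hw.2.1.hasFDerivAt_convolution_right _ hind
      (hw.1.of_le (by exact_mod_cast le_top)) y).fderiv,
    convolution_precompR_apply _ hind (hw.2.1.fderiv ℝ) (hw.1.continuous_fderiv (by simp)),
    convolution, ← integral_indicator (measurableSet_openBox 0 L)]
  refine integral_congr_ae (.of_forall fun t => ?_)
  by_cases ht : t ∈ openBox 0 L <;> simp [ht]

theorem SmoothTest.fderiv_boxAverage_single (hw : SmoothTest Ω w) (hL : 0 ≤ L) (y : En m)
    (i : Fin m) :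
    fderiv ℝ (boxAverage L w) y (EuclideanSpace.single i 1) =
      ∫ t, w (y - t) ∂faceMeasure 0 L i 0 - ∫ t, w (y - t) ∂faceMeasure 0 L i (L i) := by
  have hreflect : ∀ t, fderiv ℝ (fun t => w (y - t)) t = -fderiv ℝ w (y - t) := by
    intro t
    rw [fderiv_fun_comp t (hw.1.differentiable (by simp) _) (by fun_prop), fderiv_const_sub,
      fderiv_fun_id, ContinuousLinearMap.comp_neg, ContinuousLinearMap.comp_id]
  have hftc := setIntegral_openBox_fderiv hL i (φ := fun t => w (y - t))
    ((hw.1.of_le (by exact_mod_cast le_top)).comp (contDiff_const.sub contDiff_id))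
  simp only [hreflect, neg_apply, integral_neg, Pi.zero_apply] at hftc
  rw [hw.fderiv_boxAverage, ← neg_sub, ← hftc, neg_neg]

end BoxAverages

section Oscillation

variable {m : ℕ} {Ω : Set (En m)} {ℓ θ C : ℝ} {v : En m → ℝ}

/-- The side lengths of a box of side `ℓ` in direction `j` and `m ℓ` in the others: its two faces
orthogonal to `j` account for at least half of its surface. -/
def sideLength (j : Fin m) (ℓ : ℝ) (k : Fin m) : ℝ := if k = j then ℓ else m * ℓ

/-- The area of a face, orthogonal to direction `j`, of the box with sides `sideLength j ℓ`. -/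
def mainFaceArea (j : Fin m) (ℓ : ℝ) : ℝ := ∏ k ∈ Finset.univ.erase j, sideLength j ℓ k

theorem one_le_dim (j : Fin m) : (1 : ℝ) ≤ m := by exact_mod_cast j.pos

theorem sideLength_pos (j : Fin m) (hℓ : 0 < ℓ) (k : Fin m) : 0 < sideLength j ℓ k := by
  have := one_le_dim j
  unfold sideLength
  split_ifs <;> positivity

theorem sideLength_le (j : Fin m) (hℓ : 0 < ℓ) (k : Fin m) : sideLength j ℓ k ≤ m * ℓ := by
  unfold sideLength
  split_ifs
  · exact le_mul_of_one_le_left hℓ.le (one_le_dim j)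
  · exact le_rfl

theorem mainFaceArea_pos (j : Fin m) (hℓ : 0 < ℓ) : 0 < mainFaceArea j ℓ :=
  Finset.prod_pos fun k _ => sideLength_pos j hℓ k

theorem prod_sideLength (j : Fin m) (ℓ : ℝ) : ∏ k, sideLength j ℓ k = ℓ * mainFaceArea j ℓ := by
  rw [← Finset.mul_prod_erase Finset.univ _ (Finset.mem_univ j), mainFaceArea]
  simp only [sideLength, if_true]

theorem prod_erase_sideLength_of_ne {i j : Fin m} (hij : i ≠ j) (hℓ : 0 < ℓ) :
    ∏ k ∈ Finset.univ.erase i, sideLength j ℓ k = mainFaceArea j ℓ / m := by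
  have hm := one_le_dim j
  have hprod := Finset.mul_prod_erase Finset.univ (sideLength j ℓ) (Finset.mem_univ i)
  rw [prod_sideLength, sideLength, if_neg hij] at hprod
  rw [eq_div_iff (by positivity)]
  refine mul_left_cancel₀ hℓ.ne' ?_
  rw [← hprod]
  ring

theorem boxSurface_sideLength_le (j : Fin m) (hℓ : 0 < ℓ) :
    boxSurface (sideLength j ℓ) ≤ 4 * mainFaceArea j ℓ := by
  have hm := one_le_dim j
  have hA := mainFaceArea_pos j hℓ
  have hside : (Finset.univ.erase j).card * (mainFaceArea j ℓ / m) ≤ mainFaceArea j ℓ := by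
    rw [← mul_div_assoc, div_le_iff₀ (by positivity), mul_comm]
    gcongr
    simp
  rw [boxSurface, ← Finset.add_sum_erase Finset.univ _ (Finset.mem_univ j),
    Finset.sum_congr rfl fun i hi => prod_erase_sideLength_of_ne (Finset.ne_of_mem_erase hi) hℓ,
    Finset.sum_const, nsmul_eq_mul, ← mainFaceArea]
  linarith

theorem norm_le_of_forall_mem_Icc_sideLength (j : Fin m) (hℓ : 0 < ℓ) {t : En m}
    (ht : ∀ k, t k ∈ Icc 0 (sideLength j ℓ k)) : ‖t‖ ≤ m ^ 2 * ℓ := by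
  have hsum : √(∑ k, ‖t k‖ ^ 2) ≤ ∑ k, ‖t k‖ := Real.sqrt_le_iff.2
    ⟨Finset.sum_nonneg fun _ _ => norm_nonneg _,
      Finset.sum_sq_le_sq_sum_of_nonneg fun _ _ => norm_nonneg _⟩
  calc ‖t‖ ≤ ∑ k, ‖t k‖ := (EuclideanSpace.norm_eq t).trans_le hsum
    _ ≤ ∑ _k : Fin m, m * ℓ := Finset.sum_le_sum fun k _ => by
        rw [Real.norm_of_nonneg (ht k).1]
        exact (ht k).2.trans (sideLength_le j hℓ k)
    _ = m ^ 2 * ℓ := by simp; ring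

/-- The weight `cos(π yⱼ / ℓ + θ) v(y)`, normalised by the area of the main faces.  The cosine
changes sign between these faces, which lie at distance `ℓ`. -/
def oscillatingWeight (j : Fin m) (ℓ θ : ℝ) (v : En m → ℝ) (y : En m) : ℝ :=
  (mainFaceArea j ℓ)⁻¹ * Real.cos (Real.pi / ℓ * y j + θ) * v y

theorem SmoothTest.smoothTest_oscillatingWeight (hv : SmoothTest Ω v) (j : Fin m) (ℓ θ : ℝ) :
    SmoothTest Ω (oscillatingWeight j ℓ θ v) := by
  have hcos : ContDiff ℝ (⊤ : ℕ∞) fun y : En m =>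
      (mainFaceArea j ℓ)⁻¹ * Real.cos (Real.pi / ℓ * y j + θ) :=
    contDiff_const.mul (Real.contDiff_cos.comp ((contDiff_const.mul
      (EuclideanSpace.proj j : En m →L[ℝ] ℝ).contDiff).add contDiff_const))
  have hmul := hv.mul_contDiff hcos
  simp only [mul_comm (v _)] at hmul
  exact hmul

theorem norm_oscillatingWeight_le (j : Fin m) (hℓ : 0 < ℓ) (θ : ℝ) (v : En m → ℝ) (y : En m) :
    ‖oscillatingWeight j ℓ θ v y‖ ≤ (mainFaceArea j ℓ)⁻¹ * ‖v y‖ := by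
  have hA := mainFaceArea_pos j hℓ
  rw [oscillatingWeight, norm_mul, norm_mul, Real.norm_of_nonneg (inv_pos.2 hA).le]
  gcongr
  exact mul_le_of_le_one_right (by positivity) (Real.abs_cos_le_one _)

theorem boxSurface_mul_integral_abs_oscillatingWeight_le (j : Fin m) (hℓ : 0 < ℓ) (θ : ℝ)
    (hv : SmoothTest Ω v) (hv0 : ∀ y, 0 ≤ v y) :
    boxSurface (sideLength j ℓ) * ∫ z, |oscillatingWeight j ℓ θ v z| ≤ 4 * ∫ z, v z := by
  have hA := mainFaceArea_pos j hℓ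
  have hint : ∫ z, |oscillatingWeight j ℓ θ v z| ≤ (mainFaceArea j ℓ)⁻¹ * ∫ z, v z := by
    rw [← integral_const_mul]
    refine integral_mono (hv.smoothTest_oscillatingWeight j ℓ θ).integrable.abs
      (hv.integrable.const_mul _) fun z => ?_
    simpa [abs_of_nonneg (hv0 z)] using norm_oscillatingWeight_le j hℓ θ v z
  calc _ ≤ (4 * mainFaceArea j ℓ) * ((mainFaceArea j ℓ)⁻¹ * ∫ z, v z) := by
        have := boxSurface_sideLength_le j hℓ
        gcongr
    _ = _ := by field_simp

theorem closedBox_subset_of_oscillatingWeight_ne_zero (j : Fin m) (hℓ : 0 < ℓ) {z : En m}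
    (hΩ : cthickening (m ^ 2 * ℓ) (tsupport v) ⊆ Ω) (hz : oscillatingWeight j ℓ θ v z ≠ 0) :
    closedBox z.ofLp (z.ofLp + sideLength j ℓ) ⊆ Ω := by
  refine fun y hy => hΩ (mem_cthickening_of_dist_le y z _ _
    (subset_tsupport v (right_ne_zero_of_mul hz)) ?_)
  rw [dist_eq_norm]
  exact norm_le_of_forall_mem_Icc_sideLength j hℓ fun k =>
    ⟨sub_nonneg.2 (hy k).1, sub_le_iff_le_add'.2 (hy k).2⟩

theorem fderiv_oscillatingWeight_of_ne {j k : Fin m} (hkj : k ≠ j) (ℓ θ : ℝ) {y : En m}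
    (hv : DifferentiableAt ℝ v y) :
    fderiv ℝ (oscillatingWeight j ℓ θ v) y (EuclideanSpace.single k 1) =
      (mainFaceArea j ℓ)⁻¹ * Real.cos (Real.pi / ℓ * y j + θ) *
        fderiv ℝ v y (EuclideanSpace.single k 1) := by
  have hphase : HasFDerivAt (fun y : En m => Real.pi / ℓ * y j + θ)
      ((Real.pi / ℓ) • (EuclideanSpace.proj j : En m →L[ℝ] ℝ)) y :=
    ((EuclideanSpace.proj j : En m →L[ℝ] ℝ).hasFDerivAt.const_mul _).add_const θ
  have hprod := (hphase.cos.const_mul (mainFaceArea j ℓ)⁻¹).mul hv.hasFDerivAt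
  have hfderiv : fderiv ℝ (oscillatingWeight j ℓ θ v) y = _ := hprod.fderiv
  rw [hfderiv]
  simp [hkj.symm]

/-- The smooth function on `ℝᵐ` obtained by averaging the indicators of boxes with sides
`sideLength j ℓ` against the oscillating weight. -/
def oscillatingAverage (j : Fin m) (ℓ θ : ℝ) (v : En m → ℝ) : En m → ℝ :=
  boxAverage (sideLength j ℓ) (oscillatingWeight j ℓ θ v)

theorem SmoothTest.smoothTest_oscillatingAverage (hv : SmoothTest Ω v) (j : Fin m) (ℓ θ : ℝ) :
    SmoothTest univ (oscillatingAverage j ℓ θ v) :=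
  (hv.smoothTest_oscillatingWeight j ℓ θ).smoothTest_boxAverage _

theorem faceMeasure_sideLength_univ (j : Fin m) (hℓ : 0 < ℓ) (c : ℝ) :
    (faceMeasure 0 (sideLength j ℓ) j c).real univ = mainFaceArea j ℓ := by
  rw [Measure.real, faceMeasure_univ, ENNReal.toReal_prod]
  refine Finset.prod_congr rfl fun k _ => ?_
  simp [ENNReal.toReal_ofReal (sideLength_pos j hℓ k).le]

theorem ae_faceMeasure_norm_le (j : Fin m) (hℓ : 0 < ℓ) {c : ℝ} (hc : c ∈ Icc 0 ℓ) :
    ∀ᵐ t ∂faceMeasure 0 (sideLength j ℓ) j c, ‖t‖ ≤ m ^ 2 * ℓ := by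
  filter_upwards [ae_faceMeasure 0 (sideLength j ℓ) j c] with t ht
  refine norm_le_of_forall_mem_Icc_sideLength j hℓ fun k => ?_
  by_cases hk : k = j
  · rw [hk, ht.1, sideLength, if_pos rfl]
    exact hc
  · exact Ioo_subset_Icc_self (ht.2 k hk)

theorem abs_average_faceMeasure_sub_le (j : Fin m) (hℓ : 0 < ℓ) {c : ℝ} (hc : c ∈ Icc 0 ℓ)
    (hv : ContDiff ℝ 1 v) (hC : ∀ y, ‖fderiv ℝ v y‖ ≤ C) (y : En m) :
    |⨍ t, v (y - t) ∂faceMeasure 0 (sideLength j ℓ) j c - v y| ≤ C * (m ^ 2 * ℓ) := by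
  have hC0 : 0 ≤ C := (norm_nonneg _).trans (hC 0)
  have huniv := faceMeasure_sideLength_univ j hℓ c
  have hfin : IsFiniteMeasure (faceMeasure 0 (sideLength j ℓ) j c) :=
    ⟨by rw [faceMeasure_univ]; exact ENNReal.prod_lt_top fun _ _ => ENNReal.ofReal_lt_top⟩
  have hne : NeZero (faceMeasure 0 (sideLength j ℓ) j c) := by
    refine ⟨fun h => (mainFaceArea_pos j hℓ).ne ?_⟩
    rw [← huniv, h, measureReal_zero_apply]
  have hball : ∀ᵐ t ∂faceMeasure 0 (sideLength j ℓ) j c,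
      v (y - t) ∈ closedBall (v y) (C * (m ^ 2 * ℓ)) := by
    filter_upwards [ae_faceMeasure_norm_le j hℓ hc] with t ht
    have hlip := convex_univ.norm_image_sub_le_of_norm_fderiv_le
      (fun x _ => hv.differentiable one_ne_zero x) (fun x _ => hC x) (mem_univ y)
      (mem_univ (y - t))
    rw [sub_sub_cancel_left, norm_neg] at hlip
    exact mem_closedBall_iff_norm.2 (hlip.trans (by gcongr))
  have hint : Integrable (fun t => v (y - t)) (faceMeasure 0 (sideLength j ℓ) j c) := by
    have hcont : Continuous fun t => v (y - t) := hv.continuous.comp (continuous_sub_left y)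
    refine .of_bound hcont.aestronglyMeasurable (‖v y‖ + C * (m ^ 2 * ℓ)) ?_
    filter_upwards [hball] with t ht
    exact norm_le_norm_add_const_of_dist_le ht
  exact mem_closedBall_iff_norm.1
    ((convex_closedBall _ _).average_mem isClosed_closedBall hball hint)

theorem SmoothTest.fderiv_oscillatingAverage_single (hv : SmoothTest Ω v) (j : Fin m)
    (hℓ : 0 < ℓ) (θ : ℝ) (y : En m) :
    fderiv ℝ (oscillatingAverage j ℓ θ v) y
        (EuclideanSpace.single j 1) =
      Real.cos (Real.pi / ℓ * y j + θ) *
        (⨍ t, v (y - t) ∂faceMeasure 0 (sideLength j ℓ) j 0 +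
          ⨍ t, v (y - t) ∂faceMeasure 0 (sideLength j ℓ) j ℓ) := by
  have hside : sideLength j ℓ j = ℓ := if_pos rfl
  have hface : ∀ c s, Real.cos (Real.pi / ℓ * (y j - c) + θ) = s →
      ∫ t, oscillatingWeight j ℓ θ v (y - t) ∂faceMeasure 0 (sideLength j ℓ) j c =
        s * ⨍ t, v (y - t) ∂faceMeasure 0 (sideLength j ℓ) j c := by
    intro c s hs
    rw [average_eq, faceMeasure_sideLength_univ j hℓ, smul_eq_mul, ← mul_assoc,
      ← integral_const_mul]
    refine integral_congr_ae ?_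
    filter_upwards [ae_faceMeasure 0 (sideLength j ℓ) j c] with t ht
    rw [oscillatingWeight, PiLp.sub_apply, ht.1, hs, mul_comm s]
  have hshift : Real.cos (Real.pi / ℓ * (y j - ℓ) + θ) =
      -Real.cos (Real.pi / ℓ * y j + θ) := by
    rw [← Real.cos_sub_pi]
    congr 1
    field_simp
    ring
  rw [oscillatingAverage, (hv.smoothTest_oscillatingWeight j ℓ θ).fderiv_boxAverage_single
    (fun k => (sideLength_pos j hℓ k).le), hside, hface 0 _ (by rw [sub_zero]),
    hface ℓ _ hshift]
  ring

theorem SmoothTest.abs_fderiv_oscillatingAverage_le (hv : SmoothTest Ω v)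
    {j k : Fin m} (hkj : k ≠ j) (hℓ : 0 < ℓ) (θ : ℝ) (hC : ∀ y, ‖fderiv ℝ v y‖ ≤ C) (y : En m) :
    |fderiv ℝ (oscillatingAverage j ℓ θ v) y
      (EuclideanSpace.single k 1)| ≤ C * ℓ := by
  have hA := mainFaceArea_pos j hℓ
  have hpartial : ∀ t, ‖fderiv ℝ (oscillatingWeight j ℓ θ v) (y - t)
      (EuclideanSpace.single k 1)‖ ≤ (mainFaceArea j ℓ)⁻¹ * C := by
    intro t
    have hdir := (fderiv ℝ v (y - t)).le_of_opNorm_le (hC _) (EuclideanSpace.single k 1)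
    rw [PiLp.norm_single, norm_one, mul_one] at hdir
    rw [fderiv_oscillatingWeight_of_ne hkj ℓ θ (hv.1.differentiable (by simp) _), norm_mul,
      norm_mul, Real.norm_of_nonneg (inv_pos.2 hA).le]
    gcongr
    exact mul_le_of_le_one_right (inv_pos.2 hA).le (Real.abs_cos_le_one _)
  have hvol : volume.real (openBox 0 (sideLength j ℓ)) = ℓ * mainFaceArea j ℓ := by
    rw [Measure.real, volume_openBox, ENNReal.toReal_prod, ← prod_sideLength]
    refine Finset.prod_congr rfl fun k _ => ?_
    simp [ENNReal.toReal_ofReal (sideLength_pos j hℓ k).le]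
  rw [oscillatingAverage, (hv.smoothTest_oscillatingWeight j ℓ θ).fderiv_boxAverage,
    ← Real.norm_eq_abs]
  calc _ ≤ (mainFaceArea j ℓ)⁻¹ * C * volume.real (openBox 0 (sideLength j ℓ)) :=
        norm_setIntegral_le_of_norm_le_const (volume_openBox_lt_top _ _) fun t _ => hpartial t
    _ = C * ℓ := by
        rw [hvol]
        field_simp

theorem SmoothTest.abs_fderiv_oscillatingAverage_sub_le (hv : SmoothTest Ω v)
    (j k : Fin m) (hℓ : 0 < ℓ) (θ : ℝ) (hC : ∀ y, ‖fderiv ℝ v y‖ ≤ C) (y : En m) :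
    |fderiv ℝ (oscillatingAverage j ℓ θ v) y
        (EuclideanSpace.single k 1) -
      if k = j then 2 * Real.cos (Real.pi / ℓ * y j + θ) * v y else 0| ≤
      2 * C * (m ^ 2 * ℓ) := by
  have hC0 : 0 ≤ C := (norm_nonneg _).trans (hC 0)
  have hm := one_le_dim j
  split_ifs with hkj
  · have hv1 : ContDiff ℝ 1 v := hv.1.of_le (by exact_mod_cast le_top)
    have hnear := abs_average_faceMeasure_sub_le j hℓ (left_mem_Icc.2 hℓ.le) hv1 hC y
    have hfar := abs_average_faceMeasure_sub_le j hℓ (right_mem_Icc.2 hℓ.le) hv1 hC y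
    rw [hkj, hv.fderiv_oscillatingAverage_single j hℓ θ y]
    set near := ⨍ t, v (y - t) ∂faceMeasure 0 (sideLength j ℓ) j 0
    set far := ⨍ t, v (y - t) ∂faceMeasure 0 (sideLength j ℓ) j ℓ
    calc |Real.cos (Real.pi / ℓ * y j + θ) * (near + far) -
          2 * Real.cos (Real.pi / ℓ * y j + θ) * v y|
        = |Real.cos (Real.pi / ℓ * y j + θ)| * |(near - v y) + (far - v y)| := by
          rw [← abs_mul]
          ring_nf
      _ ≤ 1 * (|near - v y| + |far - v y|) := by
          gcongr
          · exact Real.abs_cos_le_one _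
          · exact abs_add_le _ _
      _ ≤ 2 * C * (m ^ 2 * ℓ) := by linarith
  · rw [sub_zero]
    refine (hv.abs_fderiv_oscillatingAverage_le hkj hℓ θ hC y).trans ?_
    have hone : (1 : ℝ) ≤ m ^ 2 := one_le_pow₀ hm
    have := mul_le_mul_of_nonneg_left hone (by positivity : 0 ≤ C * ℓ)
    nlinarith [mul_nonneg hC0 hℓ.le]

end Oscillation

section Conclusion

variable {n m : ℕ} {Ω₁ : Set (En n)} {Ω₂ : Set (En m)} {f : En n → En m} {ν : Measure (En n)}
  {σ : En n → Fin m → Fin n → ℝ} {K : ℝ≥0} {v : En m → ℝ} {ℓ : ℝ}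

theorem norm_chainDensity_sub_le {G : En m → ℝ} {F : En n → En m} {s : Fin m → En n → En n}
    {x : En n} (hs : ∀ k, ‖s k x‖ ≤ 1) (j : Fin m) {a c : ℝ}
    (hG : ∀ k, |fderiv ℝ G (F x) (EuclideanSpace.single k 1) - if k = j then a else 0| ≤ c) :
    ‖chainDensity G F s x - a • s j x‖ ≤ m * c := by
  have hsum : chainDensity G F s x - a • s j x = ∑ k,
      (fderiv ℝ G (F x) (EuclideanSpace.single k 1) - if k = j then a else 0) • s k x := by
    simp [chainDensity, sub_smul, Finset.sum_sub_distrib, ite_smul]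
  calc ‖chainDensity G F s x - a • s j x‖ ≤ ∑ _k : Fin m, c * 1 := by
        rw [hsum]
        refine norm_sum_le_of_le _ fun k _ => ?_
        rw [norm_smul]
        exact mul_le_mul (hG k) (hs k) (norm_nonneg _) ((abs_nonneg _).trans (hG k))
    _ = m * c := by simp

theorem one_le_abs_cos_add_abs_sin (x : ℝ) : 1 ≤ |Real.cos x| + |Real.sin x| := by
  have hsq : (|Real.cos x| + |Real.sin x|) ^ 2 = 1 + 2 * |Real.cos x| * |Real.sin x| := by
    rw [add_sq, sq_abs, sq_abs, ← Real.cos_sq_add_sin_sq x]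
    ring
  refine (one_le_sq_iff₀ (by positivity)).1 ?_
  rw [hsq]
  exact le_add_of_nonneg_right (by positivity)

theorem SmoothTest.enorm_le_enorm_chainDensity_oscillatingAverage (hv : SmoothTest Ω₂ v)
    (hv0 : ∀ y, 0 ≤ v y) {C : ℝ} (hC : ∀ y, ‖fderiv ℝ v y‖ ≤ C) (j : Fin m) (hℓ : 0 < ℓ)
    {F : En n → En m} {s : Fin m → En n → En n} {x : En n} (hs : ∀ k, ‖s k x‖ ≤ 1) :
    2 * (ENNReal.ofReal (v (F x)) * ‖s j x‖ₑ) ≤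
      ‖chainDensity (oscillatingAverage j ℓ 0 v) F s x‖ₑ +
        ‖chainDensity (oscillatingAverage j ℓ (Real.pi / 2) v) F s x‖ₑ +
          ENNReal.ofReal (2 * (m * (2 * C * (m ^ 2 * ℓ)))) := by
  have hclose : ∀ θ, 2 * |Real.cos (Real.pi / ℓ * F x j + θ)| * (v (F x) * ‖s j x‖) ≤
      ‖chainDensity (oscillatingAverage j ℓ θ v) F s x‖ + m * (2 * C * (m ^ 2 * ℓ)) := by
    intro θ
    have hdiff := norm_chainDensity_sub_le hs j
      (hv.abs_fderiv_oscillatingAverage_sub_le j · hℓ θ hC (F x))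
    have htri := norm_le_norm_add_norm_sub (chainDensity (oscillatingAverage j ℓ θ v) F s x)
      ((2 * Real.cos (Real.pi / ℓ * F x j + θ) * v (F x)) • s j x)
    rw [norm_smul, norm_mul, norm_mul, Real.norm_of_nonneg (hv0 _), Real.norm_two] at htri
    calc _ = 2 * ‖Real.cos (Real.pi / ℓ * F x j + θ)‖ * v (F x) * ‖s j x‖ := by
          rw [Real.norm_eq_abs]
          ring
      _ ≤ _ := htri.trans (by gcongr)
  have hreal : 2 * (v (F x) * ‖s j x‖) ≤
      ‖chainDensity (oscillatingAverage j ℓ 0 v) F s x‖ +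
        ‖chainDensity (oscillatingAverage j ℓ (Real.pi / 2) v) F s x‖ +
          2 * (m * (2 * C * (m ^ 2 * ℓ))) := by
    have hphase := hclose 0
    have hquarter := hclose (Real.pi / 2)
    rw [add_zero] at hphase
    rw [Real.cos_add_pi_div_two, abs_neg] at hquarter
    have hvs : 0 ≤ v (F x) * ‖s j x‖ := mul_nonneg (hv0 _) (norm_nonneg _)
    have htrig := one_le_abs_cos_add_abs_sin (Real.pi / ℓ * F x j)
    nlinarith [mul_le_mul_of_nonneg_right htrig hvs]
  have hC0 : 0 ≤ C := (norm_nonneg _).trans (hC 0)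
  have hofReal := ENNReal.ofReal_le_ofReal hreal
  rwa [ENNReal.ofReal_add (by positivity) (by positivity),
    ENNReal.ofReal_add (norm_nonneg _) (norm_nonneg _), ENNReal.ofReal_mul two_pos.le,
    ENNReal.ofReal_mul (hv0 _), ofReal_norm, ofReal_norm, ofReal_norm, ENNReal.ofReal_ofNat]
    at hofReal

theorem BoxPerimeterBound.lintegral_enorm_chainDensity_oscillatingAverage_le
    (hK : BoxPerimeterBound Ω₁ Ω₂ f K) (hΩ₁ : IsOpen Ω₁) (hf : LocallyIntegrableOn f Ω₁)
    (hν : ∀ C, IsCompact C → C ⊆ Ω₁ → ν C < ⊤) (hσ : IsVariationMeasure Ω₁ f σ ν)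
    (hjump : NoJumpPart f ν) (hv : SmoothTest Ω₂ v) (hv0 : ∀ y, 0 ≤ v y) (j : Fin m)
    (hℓ : 0 < ℓ) (hℓΩ : cthickening (m ^ 2 * ℓ) (tsupport v) ⊆ Ω₂) (θ : ℝ) :
    ∫⁻ x, ‖chainDensity (oscillatingAverage j ℓ θ v) (preciseRep f) (rowField σ) x‖ₑ ∂ν ≤
      ENNReal.ofReal (4 * K * ∫ y, v y) := by
  have hsurface := boxSurface_mul_integral_abs_oscillatingWeight_le j hℓ θ hv hv0
  refine (hK.lintegral_enorm_chainDensity_le hΩ₁ hf hσ.hasDistribGradient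
    (hσ.locallyIntegrableOn_rowField hΩ₁ hν) hσ.2.2.1
    (aemeasurable_preciseRep hΩ₁ hf hσ.2.2.1 hjump) ?_ (sideLength_pos j hℓ)
    (hv.smoothTest_oscillatingWeight j ℓ θ).integrable
    (fun z => closedBox_subset_of_oscillatingWeight_ne_zero j hℓ hℓΩ)
    (hv.smoothTest_oscillatingAverage j ℓ θ)).trans (ENNReal.ofReal_le_ofReal ?_)
  · filter_upwards [show ∀ᵐ x ∂ν, ∃ z, ApproxLimAt f x z from hjump] with x hx
    exact approxLimAt_preciseRep hx
  · rw [mul_assoc, mul_comm 4, mul_assoc (K : ℝ)]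
    exact mul_le_mul_of_nonneg_left hsurface K.coe_nonneg

theorem BoxPerimeterBound.two_mul_setLIntegral_mul_enorm_rowField_le
    (hK : BoxPerimeterBound Ω₁ Ω₂ f K) (hΩ₁ : IsOpen Ω₁) (hf : LocallyIntegrableOn f Ω₁)
    (hν : ∀ C, IsCompact C → C ⊆ Ω₁ → ν C < ⊤) (hσ : IsVariationMeasure Ω₁ f σ ν)
    (hjump : NoJumpPart f ν) (hv : SmoothTest Ω₂ v) (hv0 : ∀ y, 0 ≤ v y) {C : ℝ}
    (hC : ∀ y, ‖fderiv ℝ v y‖ ≤ C) (j : Fin m) (hℓ : 0 < ℓ)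
    (hℓΩ : cthickening (m ^ 2 * ℓ) (tsupport v) ⊆ Ω₂) {Q : Set (En n)} (hQ : IsCompact Q)
    (hQΩ : Q ⊆ Ω₁) :
    2 * ∫⁻ x in Q, ENNReal.ofReal (v (preciseRep f x)) * ‖rowField σ j x‖ₑ ∂ν ≤
      2 * ENNReal.ofReal (4 * K * ∫ y, v y) +
        ENNReal.ofReal (2 * (m * (2 * C * (m ^ 2 * ℓ)))) * ν Q := by
  have hle := hK.lintegral_enorm_chainDensity_oscillatingAverage_le hΩ₁ hf hν hσ hjump hv hv0 j
    hℓ hℓΩ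
  have hmeas := ((locallyIntegrableOn_chainDensity (hv.smoothTest_oscillatingAverage j ℓ 0) hΩ₁
    (aemeasurable_preciseRep hΩ₁ hf hσ.2.2.1 hjump)
    (hσ.locallyIntegrableOn_rowField hΩ₁ hν)).integrableOn_compact_subset hQΩ hQ).1.enorm
  rw [← lintegral_const_mul' _ _ ENNReal.ofNat_ne_top]
  calc _ ≤ ∫⁻ x in Q,
        (‖chainDensity (oscillatingAverage j ℓ 0 v) (preciseRep f) (rowField σ) x‖ₑ +
          ‖chainDensity (oscillatingAverage j ℓ (Real.pi / 2) v) (preciseRep f)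
            (rowField σ) x‖ₑ) + ENNReal.ofReal (2 * (m * (2 * C * (m ^ 2 * ℓ)))) ∂ν := by
        refine lintegral_mono_ae (ae_restrict_of_ae ?_)
        filter_upwards [ae_all_iff.2 hσ.ae_norm_rowField_le_one] with x hx
        exact hv.enorm_le_enorm_chainDensity_oscillatingAverage hv0 hC j hℓ hx
    _ = _ := by
        rw [lintegral_add_right _ measurable_const, lintegral_add_left' hmeas,
          setLIntegral_const]
    _ ≤ _ := by
        rw [two_mul (ENNReal.ofReal (4 * K * _))]
        gcongr <;> exact (setLIntegral_le_lintegral _ _).trans (hle _)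

theorem BoxPerimeterBound.setLIntegral_mul_enorm_rowField_le
    (hK : BoxPerimeterBound Ω₁ Ω₂ f K) (hΩ₁ : IsOpen Ω₁) (hΩ₂ : IsOpen Ω₂)
    (hf : LocallyIntegrableOn f Ω₁) (hν : ∀ C, IsCompact C → C ⊆ Ω₁ → ν C < ⊤)
    (hσ : IsVariationMeasure Ω₁ f σ ν) (hjump : NoJumpPart f ν) (hv : SmoothTest Ω₂ v)
    (hv0 : ∀ y, 0 ≤ v y) (j : Fin m) {Q : Set (En n)} (hQ : IsCompact Q) (hQΩ : Q ⊆ Ω₁) :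
    ∫⁻ x in Q, ENNReal.ofReal (v (preciseRep f x)) * ‖rowField σ j x‖ₑ ∂ν ≤
      ENNReal.ofReal (4 * K * ∫ y, v y) := by
  obtain ⟨C, hC⟩ := (hv.2.1.fderiv ℝ).exists_bound_of_continuous
    (hv.1.continuous_fderiv (by simp))
  obtain ⟨δ, hδ, hδΩ⟩ := hv.2.1.exists_cthickening_subset_open hΩ₂ hv.2.2
  have herror : Tendsto (fun ℓ : ℝ => 2 * ENNReal.ofReal (4 * K * ∫ y, v y) +
      ENNReal.ofReal (2 * (m * (2 * C * (m ^ 2 * ℓ)))) * ν Q) (𝓝[>] 0)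
      (𝓝 (2 * ENNReal.ofReal (4 * K * ∫ y, v y))) := by
    have hcont : Tendsto (fun ℓ : ℝ => ENNReal.ofReal (2 * (m * (2 * C * (m ^ 2 * ℓ)))))
        (𝓝[>] 0) (𝓝 0) := by
      have hlim := (ENNReal.continuous_ofReal.comp (by fun_prop :
        Continuous fun ℓ : ℝ => 2 * (m * (2 * C * (m ^ 2 * ℓ))))).tendsto 0
      simp only [Function.comp_apply, mul_zero, ENNReal.ofReal_zero] at hlim
      exact hlim.mono_left nhdsWithin_le_nhds
    simpa using tendsto_const_nhds.add
      (ENNReal.Tendsto.mul_const hcont (.inr (hν Q hQ hQΩ).ne))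
  have hsmall : ∀ᶠ ℓ : ℝ in 𝓝[>] 0, m ^ 2 * ℓ < δ := by
    have hlim := (by fun_prop : Continuous fun ℓ : ℝ => m ^ 2 * ℓ).tendsto 0
    rw [mul_zero] at hlim
    exact nhdsWithin_le_nhds (hlim.eventually (gt_mem_nhds hδ))
  refine (ENNReal.mul_le_mul_iff_right two_ne_zero ENNReal.ofNat_ne_top).1
    (ge_of_tendsto herror ?_)
  filter_upwards [hsmall, self_mem_nhdsWithin] with ℓ hℓδ hℓ
  exact hK.two_mul_setLIntegral_mul_enorm_rowField_le hΩ₁ hf hν hσ hjump hv hv0 hC j hℓ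
    ((cthickening_mono hℓδ.le _).trans hδΩ) hQ hQΩ

theorem BoxPerimeterBound.lintegral_comp_preciseRep_le
    (hK : BoxPerimeterBound Ω₁ Ω₂ f K) (hΩ₁ : IsOpen Ω₁) (hΩ₂ : IsOpen Ω₂)
    (hBV : MemBVloc Ω₁ f ν) (hjump : NoJumpPart f ν) (hv : SmoothTest Ω₂ v)
    (hv0 : ∀ y, 0 ≤ v y) :
    ∫⁻ x, ENNReal.ofReal (v (preciseRep f x)) ∂ν ≤ m * ENNReal.ofReal (4 * K * ∫ y, v y) := by
  obtain ⟨hf, hν, σ, hσ⟩ := hBV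
  refine lintegral_le_of_forall_isCompact hΩ₁ hσ.2.2.1 fun Q hQ hQΩ => ?_
  have hmeas : ∀ j, AEMeasurable
      (fun x => ENNReal.ofReal (v (preciseRep f x)) * ‖rowField σ j x‖ₑ) (ν.restrict Q) := fun j =>
    (hv.1.continuous.measurable.comp_aemeasurable
      (aemeasurable_preciseRep hΩ₁ hf hσ.2.2.1 hjump).restrict).ennreal_ofReal.mul
      (measurable_rowField hσ.1 j).enorm.aemeasurable
  calc ∫⁻ x in Q, ENNReal.ofReal (v (preciseRep f x)) ∂ν
      ≤ ∫⁻ x in Q, ∑ j, ENNReal.ofReal (v (preciseRep f x)) * ‖rowField σ j x‖ₑ ∂ν := by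
        refine lintegral_mono_ae (ae_restrict_of_ae ?_)
        filter_upwards [hσ.ae_one_le_sum_norm_rowField] with x hx
        rw [← Finset.mul_sum]
        refine le_mul_of_one_le_right' ?_
        simpa only [ENNReal.ofReal_one, ENNReal.ofReal_sum_of_nonneg fun _ _ => norm_nonneg _,
          ofReal_norm] using ENNReal.ofReal_le_ofReal hx
    _ = ∑ j, ∫⁻ x in Q, ENNReal.ofReal (v (preciseRep f x)) * ‖rowField σ j x‖ₑ ∂ν :=
        lintegral_finsetSum' _ fun j _ => hmeas j
    _ ≤ ∑ _j : Fin m, ENNReal.ofReal (4 * K * ∫ y, v y) := Finset.sum_le_sum fun j _ =>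
        hK.setLIntegral_mul_enorm_rowField_le hΩ₁ hΩ₂ hf hν hσ hjump hv hv0 j hQ hQΩ
    _ = m * ENNReal.ofReal (4 * K * ∫ y, v y) := by simp

theorem necessary_variation_bound_of_perimeter_general (hΩ₁ : IsOpen Ω₁) (hΩ₂ : IsOpen Ω₂)
    (hBV : MemBVloc Ω₁ f ν) (hjump : NoJumpPart f ν) (hK : BoxPerimeterBound Ω₁ Ω₂ f K)
    {A : Set (En m)} (hA : A ⊆ Ω₂) : ν (tildePreimage f A) ≤ 4 * m * K * volume A := by
  obtain ⟨σ, hσ⟩ := hBV.2.2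
  have hmeas := aemeasurable_preciseRep hΩ₁ hBV.1 hσ.2.2.1 hjump
  have hmap : ν.map (preciseRep f) A ≤ ((4 * m * K : ℝ≥0) • volume : Measure (En m)) A := by
    refine measure_le_of_forall_smoothTest hΩ₂ (fun v hv hv01 => ?_) hA
    have hv0 : ∀ y, 0 ≤ v y := fun y => (hv01 y).1
    rw [lintegral_map' hv.1.continuous.measurable.ennreal_ofReal.aemeasurable hmeas,
      lintegral_smul_measure, ← ofReal_integral_eq_lintegral_ofReal hv.integrable (.of_forall hv0)]
    refine (hK.lintegral_comp_preciseRep_le hΩ₁ hΩ₂ hBV hjump hv hv0).trans_eq ?_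
    rw [ENNReal.ofReal_mul (by positivity), ENNReal.ofReal_mul (by positivity)]
    simp [ENNReal.smul_def]
    ring
  calc ν (tildePreimage f A) = ν (tildePreimage f A ∩ Ω₁) :=
        (measure_inter_conull hσ.2.2.1).symm
    _ ≤ ν (preciseRep f ⁻¹' A) := measure_mono (tildePreimage_inter_subset hΩ₁ hBV.1 A)
    _ ≤ ν.map (preciseRep f) A := Measure.le_map_apply hmeas A
    _ ≤ _ := hmap
    _ = 4 * m * K * volume A := by simp [ENNReal.smul_def]

end Conclusion

theorem boxPerimeterBound_of_forall_memBVs {n m : ℕ} {Ω₁ : Set (En n)} {Ω₂ : Set (En m)}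
    {f : En n → En m} {K : ℝ≥0}
    (hper : ∀ E : Set (En m), E ⊆ Ω₂ →
      ∀ νE : Measure (En m), MemBVs Ω₂ (E.indicator fun _ => (1 : ℝ)) νE →
        ∃ νP : Measure (En n), MemBVs Ω₁ ((f ⁻¹' E ∩ Ω₁).indicator fun _ => (1 : ℝ)) νP ∧
          νP Ω₁ ≤ K * νE Ω₂) :
    BoxPerimeterBound Ω₁ Ω₂ f K := by
  intro a b hab hΩ
  obtain ⟨νP, hP, hle⟩ := hper _ ((openBox_subset_closedBox a b).trans hΩ) _
    (memBVs_indicator_openBox hab hΩ)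
  exact ⟨νP, hP, hle.trans (by gcongr; exact subset_univ _)⟩

/-- **Corollary (Statement 16).** Let `f ∈ BV_loc(Ω₁, Ω₂)` have no jump part.  If for
every set `E ⊆ Ω₂` of finite perimeter in `Ω₂` the set `f⁻¹(E)` has finite perimeter in
`Ω₁` with `P(f⁻¹(E), Ω₁) ≤ K·P(E, Ω₂)`, then `|Df|(f̃⁻¹(A)) ≤ 16·n·K·Lⁿ(A)` for all
Borel `A ⊆ Ω₂`. -/
theorem necessary_variation_bound_of_perimeter {n : ℕ}
    (Ω₁ Ω₂ : Set (En n)) (hΩ₁ : IsOpen Ω₁) (hΩ₂ : IsOpen Ω₂)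
    (f : En n → En n) (hmaps : MapsTo f Ω₁ Ω₂)
    (νf : Measure (En n)) (hBV : MemBVloc Ω₁ f νf) (hjump : NoJumpPart f νf)
    (K : ℝ) (hK : 0 ≤ K)
    (hper : ∀ E : Set (En n), E ⊆ Ω₂ →
      ∀ νE : Measure (En n), MemBVs Ω₂ (E.indicator fun _ => (1 : ℝ)) νE →
        ∃ νP : Measure (En n),
          MemBVs Ω₁ ((f ⁻¹' E ∩ Ω₁).indicator fun _ => (1 : ℝ)) νP ∧
          νP Ω₁ ≤ ENNReal.ofReal K * νE Ω₂) :
    ∀ A : Set (En n), A ⊆ Ω₂ → MeasurableSet A →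
      νf (tildePreimage f A) ≤ ENNReal.ofReal (16 * n * K) * volume A := by
  intro A hA _
  have hconst : 4 * n * ENNReal.ofReal K ≤ ENNReal.ofReal (16 * n * K) := by
    rw [ENNReal.ofReal_mul (by positivity), ENNReal.ofReal_mul (by positivity),
      ENNReal.ofReal_natCast, ENNReal.ofReal_ofNat]
    gcongr
    norm_num
  exact (necessary_variation_bound_of_perimeter_general hΩ₁ hΩ₂ hBV hjump
    (boxPerimeterBound_of_forall_memBVs hper) hA).trans (mul_le_mul_left hconst _)
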